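/- For every dimension d ≥ 1 there exists p₀ such that for every p ≥ p₀ there exists N₀ (depending on p) such that for every integer N ≥ N₀ there exists γ₀ ∈ (0,1) (depending on N) such that for every γ ∈ (0, γ₀], every finite rectangle Λ ⊂ ℤ^d, every choice, for each potential configuration, of an orthonormal basis (φ_β) of ℝ^Λ consisting of eigenvectors of H, and all x, y ∈ Λ, the eigenfunction correlator satisfies 𝔼 Σ_β |φ_β(x) φ_β(y)| ≤ (max(|x−y|, 1))^{−(p/2 − d − 1)}. -/

import Mathlib

noncomputable section

open scoped BigOperators

/-- ℓ¹ distance on `ℤ^d` (natural-number valued). -/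
def dist1 {d : ℕ} (x y : Fin d → ℤ) : ℕ := ∑ i, (x i - y i).natAbs

lemma dist1_comm {d : ℕ} (x y : Fin d → ℤ) : dist1 x y = dist1 y x :=
  Finset.sum_congr rfl fun i _ => by rw [← Int.natAbs_neg, neg_sub]

/-- ℓ¹ diameter of a finite subset of `ℤ^d`. -/
def diam1 {d : ℕ} (Λ : Finset (Fin d → ℤ)) : ℕ := (Λ ×ˢ Λ).sup fun p => dist1 p.1 p.2

/-- `Λ` is a (possibly empty) rectangle: a product of integer intervals. -/
def IsRect {d : ℕ} (Λ : Finset (Fin d → ℤ)) : Prop := ∃ a b : Fin d → ℤ, Λ = Finset.Icc a b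

/-- Entry of the Anderson Hamiltonian `H = H₀ - γ J` with potential `v`. -/
def hamEntry (d : ℕ) (γ : ℝ) (v : (Fin d → ℤ) → ℝ) (x y : Fin d → ℤ) : ℝ :=
  (if x = y then 2*d*γ + v x else 0) - γ * (if dist1 x y = 1 then 1 else 0)

/-- The Anderson Hamiltonian restricted to a finite set `X ⊂ ℤ^d`. -/
def hamOn (d : ℕ) (γ : ℝ) (v : (Fin d → ℤ) → ℝ) (X : Finset (Fin d → ℤ)) :
    Matrix X X ℝ := Matrix.of fun x y => hamEntry d γ v x y

lemma hamOn_isHermitian (d : ℕ) (γ : ℝ) (v : (Fin d → ℤ) → ℝ) (X : Finset (Fin d → ℤ)) :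
    (hamOn d γ v X).IsHermitian := by
  ext x y
  simp only [Matrix.conjTranspose_apply, hamOn, Matrix.of_apply, hamEntry, star_trivial]
  rw [dist1_comm]
  by_cases h : (y : Fin d → ℤ) = (x : Fin d → ℤ)
  · rw [if_pos h, if_pos h.symm, h]
  · rw [if_neg h, if_neg (show ¬((x : Fin d → ℤ) = (y : Fin d → ℤ)) from fun hh => h hh.symm)]

open scoped Classical in
/-- Number of eigenvalues (with multiplicity) of a Hermitian matrix in `[a,b]`. -/
def countEigIn {n : Type*} [Fintype n] [DecidableEq n] {M : Matrix n n ℝ}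
    (hM : M.IsHermitian) (a b : ℝ) : ℕ :=
  (Finset.univ.filter fun i => hM.eigenvalues i ∈ Set.Icc a b).card

/-- Expectation with respect to the uniform measure on a finite configuration space. -/
def expect {Ω : Type*} [Fintype Ω] (f : Ω → ℝ) : ℝ := (∑ ω, f ω) / Fintype.card Ω

open scoped Classical in
/-- Probability of an event with respect to the uniform measure on a finite space. -/
def prob {Ω : Type*} [Fintype Ω] (A : Ω → Prop) : ℝ :=
  ((Finset.univ.filter A).card : ℝ) / Fintype.card Ω

/-- The random potential determined by a configuration `ω : Λ → Fin N`:
the value at `x ∈ Λ` is `ω x / (N-1) ∈ {0, 1/(N-1), …, 1}`. -/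
def potential {d : ℕ} (N : ℕ) (Λ : Finset (Fin d → ℤ)) (ω : Λ → Fin N) :
    (Fin d → ℤ) → ℝ := fun x => if h : x ∈ Λ then (ω ⟨x, h⟩ : ℕ) / ((N : ℝ) - 1) else 0

/-!
The proof is a multiscale analysis along the length scales `s_k`. A site is regular at scale `s`
and energy `E` if solutions of `H u = E u` on the box of radius `s` about it are at the site far
smaller than their maximum over the box. If all sites near `x` are regular at scale `s_k`, except
those near a single one, and the exceptional region carries no quasimode, that is no solution which
is small on the boundary of the region and attains its maximum inside, then shell after shell the
estimates multiply and `x` is regular at scale `s_{k+1}`.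

The potential takes only finitely many values, so that spectral averaging is unavailable. The
probability of a quasimode at an energy close to a given one is bounded as follows. Since the
hopping is small, a quasimode cannot decrease too fast in a coordinate direction, so on its way to
the boundary it passes sites of well separated amplitudes. If two potentials agree off these sites
and both have a quasimode with these amplitudes there, Green's identity says that the potential
differences, weighted by the products of the two quasimodes, nearly cancel; as the weights are
separated, the potentials agree on these sites as well. Hence the potential off the sites
determines it on them.

A site singular at scale `s_{k+1}` at an energy near a given one requires either two distant sites
singular at scale `s_k`, an event of squared probability by independence, or a quasimode. For two
sites singular at a common, unspecified energy, a quasimode near one of them pins this energy to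
one of the eigenvalues of a box, which are independent of the potential near the other site.
Finally, if at each energy one of `x`, `y` is regular, then each eigenfunction is small at one of
them, and so is the correlator.
-/

namespace Anderson

variable {d : ℕ}

/-! ### Sup-norm geometry of the lattice -/

section Geometry

variable {Λ : Finset (Fin d → ℤ)} {x y z w : Fin d → ℤ} {r s : ℕ}

/-- The sup-norm distance on `ℤ^d`. It is natural-number valued so that comparisons of scales stay
within linear integer arithmetic. -/
def supDist (x y : Fin d → ℤ) : ℕ := Finset.univ.sup fun i => (x i - y i).natAbs

lemma natAbs_sub_le_supDist (x y : Fin d → ℤ) (i : Fin d) : (x i - y i).natAbs ≤ supDist x y :=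
  Finset.le_sup (f := fun i => (x i - y i).natAbs) (Finset.mem_univ i)

lemma supDist_le_iff : supDist x y ≤ r ↔ ∀ i, (x i - y i).natAbs ≤ r := by
  simp [supDist]

@[simp]
lemma supDist_self (x : Fin d → ℤ) : supDist x x = 0 := by
  simp [supDist]

lemma supDist_eq_zero : supDist x y = 0 ↔ x = y := by
  rw [← Nat.le_zero, supDist_le_iff, funext_iff]
  exact forall_congr' fun i => by omega

lemma supDist_comm (x y : Fin d → ℤ) : supDist x y = supDist y x :=
  Finset.sup_congr rfl fun i _ => by rw [← Int.natAbs_neg, neg_sub]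

lemma supDist_triangle (x y z : Fin d → ℤ) : supDist x z ≤ supDist x y + supDist y z := by
  refine supDist_le_iff.2 fun i => ?_
  have hxy := natAbs_sub_le_supDist x y i
  have hyz := natAbs_sub_le_supDist y z i
  omega

lemma supDist_le_dist1 (x y : Fin d → ℤ) : supDist x y ≤ dist1 x y :=
  supDist_le_iff.2 fun i => Finset.single_le_sum (f := fun i => (x i - y i).natAbs)
    (fun _ _ => Nat.zero_le _) (Finset.mem_univ i)

lemma dist1_le_mul_supDist (x y : Fin d → ℤ) : dist1 x y ≤ d * supDist x y :=
  (Finset.sum_le_card_nsmul _ _ _ fun i _ => natAbs_sub_le_supDist x y i).trans (by simp)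

/-- The sup-norm ball of radius `r` about `x` in `ℤ^d`. -/
def cube (x : Fin d → ℤ) (r : ℕ) : Finset (Fin d → ℤ) := Finset.Icc (x - r) (x + r)

lemma mem_cube : w ∈ cube x r ↔ supDist x w ≤ r := by
  simp only [cube, Finset.mem_Icc, Pi.le_def, supDist_le_iff, ← forall_and, Pi.sub_apply,
    Pi.add_apply, Pi.natCast_apply]
  exact forall_congr' fun i => by omega

lemma card_cube (x : Fin d → ℤ) (r : ℕ) : (cube x r).card = (2 * r + 1) ^ d := by
  have hside (i : Fin d) : (Finset.Icc ((x - r) i) ((x + r) i)).card = 2 * r + 1 := by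
    simp only [Int.card_Icc, Pi.sub_apply, Pi.add_apply, Pi.natCast_apply]
    omega
  rw [cube, Pi.card_Icc, Finset.prod_congr rfl fun i _ => hside i]
  simp

/-- The sup-norm ball of radius `r` about `x`, intersected with `Λ`. The centre need not lie
in `Λ`. -/
def ball (Λ : Finset (Fin d → ℤ)) (x : Fin d → ℤ) (r : ℕ) : Finset (Fin d → ℤ) :=
  {w ∈ Λ | supDist x w ≤ r}

lemma mem_ball : w ∈ ball Λ x r ↔ w ∈ Λ ∧ supDist x w ≤ r := Finset.mem_filter

lemma mem_ball_self (hx : x ∈ Λ) : x ∈ ball Λ x r := by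
  simp [mem_ball, hx]

lemma ball_subset (Λ : Finset (Fin d → ℤ)) (x : Fin d → ℤ) (r : ℕ) : ball Λ x r ⊆ Λ :=
  Finset.filter_subset _ _

lemma ball_subset_ball (h : supDist x y + s ≤ r) : ball Λ y s ⊆ ball Λ x r := fun w hw => by
  rw [mem_ball] at hw ⊢
  have := supDist_triangle x y w
  exact ⟨hw.1, by omega⟩

lemma card_ball_le (Λ : Finset (Fin d → ℤ)) (x : Fin d → ℤ) (r : ℕ) :
    (ball Λ x r).card ≤ (2 * r + 1) ^ d :=
  card_cube x r ▸ Finset.card_le_card fun _ hw => mem_cube.2 (mem_ball.1 hw).2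

/-- The nearest neighbours of `w` in `Λ`, with respect to the `ℓ¹` distance. -/
def neighbors (Λ : Finset (Fin d → ℤ)) (w : Fin d → ℤ) : Finset (Fin d → ℤ) :=
  {y ∈ Λ | dist1 w y = 1}

lemma neighbors_subset_ball (Λ : Finset (Fin d → ℤ)) (w : Fin d → ℤ) :
    neighbors Λ w ⊆ ball Λ w 1 := fun y hy => by
  obtain ⟨hyΛ, hwy⟩ := Finset.mem_filter.1 hy
  exact mem_ball.2 ⟨hyΛ, hwy ▸ supDist_le_dist1 w y⟩

lemma card_neighbors_le (Λ : Finset (Fin d → ℤ)) (w : Fin d → ℤ) :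
    (neighbors Λ w).card ≤ 3 ^ d :=
  (Finset.card_le_card (neighbors_subset_ball Λ w)).trans (card_ball_le Λ w 1)

lemma abs_sum_le_of_subset_neighbors {T : Finset (Fin d → ℤ)} (hT : T ⊆ neighbors Λ w)
    {f : (Fin d → ℤ) → ℝ} {M : ℝ} (hM : 0 ≤ M) (hf : ∀ y ∈ T, |f y| ≤ M) :
    |∑ y ∈ T, f y| ≤ 3 ^ d * M := by
  have hcard : (T.card : ℝ) ≤ 3 ^ d := by
    exact_mod_cast (Finset.card_le_card hT).trans (card_neighbors_le Λ w)
  calc |∑ y ∈ T, f y| ≤ ∑ y ∈ T, |f y| := Finset.abs_sum_le_sum_abs _ _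
    _ ≤ T.card • M := Finset.sum_le_card_nsmul _ _ _ hf
    _ ≤ 3 ^ d * M := by rw [nsmul_eq_mul]; gcongr

end Geometry

section LocalMax

variable {Λ : Finset (Fin d → ℤ)} {u : (Fin d → ℤ) → ℝ} {x y w : Fin d → ℤ} {r s : ℕ}

/-- The maximum of `|u|` over the ball of radius `r` about `x` in `Λ`, and `0` if that ball is
empty. -/
def localMax (Λ : Finset (Fin d → ℤ)) (u : (Fin d → ℤ) → ℝ) (x : Fin d → ℤ) (r : ℕ) : ℝ :=
  ((ball Λ x r).sup fun w => ‖u w‖₊ : NNReal)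

lemma localMax_nonneg : 0 ≤ localMax Λ u x r := NNReal.coe_nonneg _

lemma abs_le_localMax (hw : w ∈ ball Λ x r) : |u w| ≤ localMax Λ u x r := by
  rw [← Real.norm_eq_abs, ← coe_nnnorm]
  exact NNReal.coe_le_coe.2 (Finset.le_sup (f := fun w => ‖u w‖₊) hw)

lemma localMax_le {c : ℝ} (hc : 0 ≤ c) (h : ∀ w ∈ ball Λ x r, |u w| ≤ c) :
    localMax Λ u x r ≤ c := by
  lift c to NNReal using hc
  exact NNReal.coe_le_coe.2 (Finset.sup_le fun w hw => NNReal.coe_le_coe.1 (by simpa using h w hw))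

lemma localMax_le_localMax (h : supDist x y + s ≤ r) : localMax Λ u y s ≤ localMax Λ u x r :=
  localMax_le localMax_nonneg fun _ hw => abs_le_localMax (ball_subset_ball h hw)

lemma localMax_mono : Monotone (localMax Λ u x) := fun _ _ h =>
  localMax_le_localMax (by simpa using h)

end LocalMax

/-! ### Regular sites and quasimodes -/

section Regular

variable {Λ : Finset (Fin d → ℤ)} {γ E : ℝ} {v v' u : (Fin d → ℤ) → ℝ}
  {s S : ℕ} {δ κ : ℝ} {x b w : Fin d → ℤ}

/-- The eigenvalue equation `H u = E u` of the Hamiltonian restricted to `Λ`, at the single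
site `w`. -/
def SolvesAt (Λ : Finset (Fin d → ℤ)) (γ : ℝ) (v : (Fin d → ℤ) → ℝ) (E : ℝ)
    (u : (Fin d → ℤ) → ℝ) (w : Fin d → ℤ) : Prop :=
  (2 * d * γ + v w - E) * u w = γ * ∑ y ∈ neighbors Λ w, u y

lemma SolvesAt.congr (h : SolvesAt Λ γ v E u w) (hv : v w = v' w) : SolvesAt Λ γ v' E u w := by
  rwa [SolvesAt, ← hv]

lemma SolvesAt.const_mul (h : SolvesAt Λ γ v E u w) (c : ℝ) :
    SolvesAt Λ γ v E (fun z => c * u z) w := by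
  simp only [SolvesAt, ← Finset.mul_sum] at h ⊢
  linear_combination c * h

lemma SolvesAt.abs_le_of_nonresonant {θ M : ℝ} (h : SolvesAt Λ γ v E u w) (hγ : 0 < γ)
    (hθ : 0 < θ) (hγθ : 2 * d * γ ≤ θ / 2) (hres : θ ≤ |v w - E|) (hM : 0 ≤ M)
    (hu : ∀ y ∈ neighbors Λ w, |u y| ≤ M) : |u w| ≤ 2 * γ * 3 ^ d / θ * M := by
  have hdiag : θ / 2 ≤ |2 * d * γ + v w - E| := by
    have h1 := abs_sub_abs_le_abs_sub (v w - E) (-(2 * d * γ))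
    rw [abs_neg, abs_of_nonneg (by positivity : (0 : ℝ) ≤ 2 * d * γ)] at h1
    rw [show 2 * d * γ + v w - E = v w - E - -(2 * d * γ) by ring]
    linarith
  have hsum : θ / 2 * |u w| ≤ γ * (3 ^ d * M) :=
    calc θ / 2 * |u w| ≤ |2 * d * γ + v w - E| * |u w| := by gcongr
      _ = γ * |∑ y ∈ neighbors Λ w, u y| := by rw [← abs_mul, h, abs_mul, abs_of_pos hγ]
      _ ≤ γ * (3 ^ d * M) := by
        gcongr
        exact abs_sum_le_of_subset_neighbors subset_rfl hM hu
  have hθM : θ / 2 * (2 * γ * 3 ^ d / θ * M) = γ * (3 ^ d * M) := by field_simp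
  exact le_of_mul_le_mul_left (hθM ▸ hsum) (by positivity)

/-- Regularity of the box of radius `s` about `x` at energy `E`: every solution of the eigenvalue
equation in the interior of the box is at its centre smaller by the factor `δ` than its maximum
over the box. -/
def IsRegular (Λ : Finset (Fin d → ℤ)) (γ : ℝ) (v : (Fin d → ℤ) → ℝ) (E : ℝ) (s : ℕ) (δ : ℝ)
    (x : Fin d → ℤ) : Prop :=
  ∀ u : (Fin d → ℤ) → ℝ, (∀ w ∈ Λ, supDist x w < s → SolvesAt Λ γ v E u w) →
    |u x| ≤ δ * localMax Λ u x s

lemma IsRegular.congr (h : IsRegular Λ γ v E s δ x) (hv : ∀ w ∈ Λ, supDist x w < s → v w = v' w) :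
    IsRegular Λ γ v' E s δ x := fun u hu =>
  h u fun w hw hxw => (hu w hw hxw).congr (hv w hw hxw).symm

lemma IsRegular.mono {δ' : ℝ} (h : IsRegular Λ γ v E s δ x) (hδ : δ ≤ δ') :
    IsRegular Λ γ v E s δ' x := fun u hu =>
  (h u hu).trans (mul_le_mul_of_nonneg_right hδ localMax_nonneg)

lemma isRegular_of_nonresonant {θ : ℝ} (hx : x ∈ Λ) (hγ : 0 < γ) (hθ : 0 < θ)
    (hγθ : 2 * d * γ ≤ θ / 2) (hres : ∀ w ∈ Λ, supDist x w < s → θ ≤ |v w - E|) :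
    IsRegular Λ γ v E s ((2 * γ * 3 ^ d / θ) ^ s) x := by
  intro u hu
  have hM : 0 ≤ localMax Λ u x s := localMax_nonneg
  have hstep : ∀ j ≤ s, ∀ w ∈ Λ, supDist x w + j ≤ s →
      |u w| ≤ (2 * γ * 3 ^ d / θ) ^ j * localMax Λ u x s := by
    intro j
    induction j with
    | zero => exact fun _ w hw hxw => by simpa using abs_le_localMax (mem_ball.2 ⟨hw, hxw⟩)
    | succ j ih =>
      intro hj w hw hxw
      rw [pow_succ', mul_assoc]
      refine (hu w hw (by omega)).abs_le_of_nonresonant hγ hθ hγθ (hres w hw (by omega))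
        (by positivity) fun y hy => ?_
      obtain ⟨hyΛ, hwy⟩ := mem_ball.1 (neighbors_subset_ball Λ w hy)
      have := supDist_triangle x w y
      exact ih (by omega) y hyΛ (by omega)
  exact hstep s le_rfl x hx (by simp)

/-- The box of radius `s` about `x` is singular if it fails to be regular with factor `κ ^ 2`. The
square leaves room for a loss of one factor `κ` in `abs_le_of_not_hasQuasimode`. -/
def IsSingular (Λ : Finset (Fin d → ℤ)) (γ : ℝ) (v : (Fin d → ℤ) → ℝ) (E : ℝ) (s : ℕ) (κ : ℝ)
    (x : Fin d → ℤ) : Prop :=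
  ¬ IsRegular Λ γ v E s (κ ^ 2) x

lemma IsSingular.congr (h : IsSingular Λ γ v E s κ x)
    (hv : ∀ w ∈ Λ, supDist x w < s → v w = v' w) : IsSingular Λ γ v' E s κ x := fun hreg =>
  h (hreg.congr fun w hw hxw => (hv w hw hxw).symm)

/-- `u` is a quasimode at energy `E` in the box of radius `3 s` about `b`: it solves the eigenvalue
equation there, is bounded by `1`, and is at most `κ` in modulus at the boundary of the box. -/
structure IsQuasimode (Λ : Finset (Fin d → ℤ)) (γ : ℝ) (v : (Fin d → ℤ) → ℝ) (E : ℝ) (s : ℕ)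
    (κ : ℝ) (b : Fin d → ℤ) (u : (Fin d → ℤ) → ℝ) : Prop where
  solvesAt : ∀ w ∈ ball Λ b (3 * s), SolvesAt Λ γ v E u w
  abs_le_one : ∀ w ∈ ball Λ b (3 * s + 1), |u w| ≤ 1
  abs_le_of_le_supDist : ∀ w ∈ ball Λ b (3 * s + 1), 3 * s ≤ supDist b w → |u w| ≤ κ

/-- There is a quasimode about `b` that attains its maximum modulus `1` within distance `2 s`
of `b`. -/
def HasQuasimode (Λ : Finset (Fin d → ℤ)) (γ : ℝ) (v : (Fin d → ℤ) → ℝ) (E : ℝ) (s : ℕ) (κ : ℝ)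
    (b : Fin d → ℤ) : Prop :=
  ∃ u, IsQuasimode Λ γ v E s κ b u ∧ ∃ z ∈ ball Λ b (2 * s), |u z| = 1

lemma hasQuasimode_of_forall_abs_le {z : Fin d → ℤ} (hz : z ∈ ball Λ b (2 * s)) (hz0 : 0 < |u z|)
    (hu : ∀ w ∈ ball Λ b (3 * s), SolvesAt Λ γ v E u w)
    (hmax : ∀ w ∈ ball Λ b (3 * s + 1), |u w| ≤ |u z|)
    (hbdry : ∀ w ∈ ball Λ b (3 * s + 1), 3 * s ≤ supDist b w → |u w| ≤ κ * |u z|) :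
    HasQuasimode Λ γ v E s κ b := by
  have hscale (w : Fin d → ℤ) : |(|u z|)⁻¹ * u w| = |u w| / |u z| := by
    rw [abs_mul, abs_inv, abs_abs, inv_mul_eq_div]
  refine ⟨fun w => (|u z|)⁻¹ * u w, ⟨fun w hw => (hu w hw).const_mul _, fun w hw => ?_,
    fun w hw hbw => ?_⟩, z, hz, ?_⟩
  · rw [hscale, div_le_one hz0]
    exact hmax w hw
  · rw [hscale, div_le_iff₀ hz0]
    exact hbdry w hw hbw
  · rw [hscale, div_self hz0.ne']

lemma IsRegular.abs_le_localMax (h : IsRegular Λ γ v E s δ w) (hδ : 0 ≤ δ) {r : ℕ}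
    (hu : ∀ y ∈ Λ, supDist x y < S → SolvesAt Λ γ v E u y) (hxw : supDist x w ≤ r)
    (hr : r + s ≤ S) : |u w| ≤ δ * localMax Λ u x (r + s) := by
  refine (h u fun y hy hwy => hu y hy ?_).trans
    (mul_le_mul_of_nonneg_left (localMax_le_localMax (by omega)) hδ)
  have := supDist_triangle x w y
  omega

lemma abs_le_of_not_hasQuasimode (hs : 1 ≤ s) (hκ : 0 < κ) (hκ1 : κ < 1)
    (hq : ¬ HasQuasimode Λ γ v E s κ b)
    (hreg : ∀ w ∈ ball Λ b (3 * s + 1), 2 * s < supDist b w → IsRegular Λ γ v E s (κ ^ 2) w)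
    (hu : ∀ y ∈ Λ, supDist b y < 5 * s → SolvesAt Λ γ v E u y) (hw : w ∈ ball Λ b (2 * s)) :
    |u w| ≤ κ * localMax Λ u b (5 * s) := by
  have hL : 0 ≤ localMax Λ u b (5 * s) := localMax_nonneg
  have hsub : ball Λ b (2 * s) ⊆ ball Λ b (3 * s + 1) :=
    ball_subset_ball (by rw [supDist_self]; omega)
  have hring : ∀ z ∈ ball Λ b (3 * s + 1), 2 * s < supDist b z →
      |u z| ≤ κ ^ 2 * localMax Λ u b (5 * s) := fun z hz hbz =>
    ((hreg z hz hbz).abs_le_localMax (sq_nonneg κ) hu (mem_ball.1 hz).2 (by omega)).trans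
      (mul_le_mul_of_nonneg_left (localMax_mono (by omega)) (sq_nonneg κ))
  obtain ⟨z, hz, hmax⟩ := Finset.exists_max_image _ (fun w => |u w|) ⟨w, hsub hw⟩
  refine (hmax w (hsub hw)).trans (le_of_not_gt fun hlt => hq ?_)
  have hκL : κ ^ 2 * localMax Λ u b (5 * s) ≤ κ * |u z| := by
    rw [pow_two, mul_assoc]
    exact mul_le_mul_of_nonneg_left hlt.le hκ.le
  have hz2 : supDist b z ≤ 2 * s := by
    by_contra! hbz
    have := hring z hz hbz
    nlinarith [abs_nonneg (u z)]
  refine hasQuasimode_of_forall_abs_le (mem_ball.2 ⟨(mem_ball.1 hz).1, hz2⟩)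
    (lt_of_le_of_lt (by positivity) hlt) (fun y hy => hu y (mem_ball.1 hy).1 ?_) hmax
    fun y hy hby => (hring y hy (by omega)).trans hκL
  have := (mem_ball.1 hy).2
  omega

end Regular

/-! ### The deterministic multiscale step -/

section DeterministicStep

lemma le_pow_mul_of_forall_ge {G : ℕ → ℝ} (hG : Monotone G) {δ : ℝ} (hδ : 0 ≤ δ) {s S R : ℕ}
    (h : ∀ r, R ≤ r → r + s ≤ S → G r ≤ δ * G (r + s)) (n : ℕ) {r : ℕ} (hR : R ≤ r)
    (hr : r + n * s ≤ S) : G r ≤ δ ^ n * G S := by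
  induction n generalizing r with
  | zero => simpa using hG (by omega)
  | succ n ih =>
    rw [Nat.succ_mul] at hr
    calc G r ≤ δ * G (r + s) := h r hR (by omega)
      _ ≤ δ * (δ ^ n * G S) := by gcongr; exact ih (by omega) (by omega)
      _ = δ ^ (n + 1) * G S := by ring

-- The radii between `R - 2 s` and `R + 5 s` may fail to contract; monotonicity jumps over them.
lemma le_pow_mul_of_forall_off_gap {G : ℕ → ℝ} (hG : Monotone G) {δ : ℝ} (hδ : 0 ≤ δ) {s S R : ℕ}
    (h : ∀ r, r + 5 * s ≤ S → (r + 2 * s < R ∨ R + 5 * s ≤ r) → G r ≤ δ * G (r + s))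
    (n : ℕ) {r : ℕ} (hr : r + n * s + 12 * s ≤ S) : G r ≤ δ ^ n * G S := by
  induction n generalizing r with
  | zero => simpa using hG (by omega)
  | succ n ih =>
    rw [Nat.succ_mul] at hr
    rcases lt_or_ge (r + 2 * s) R with hlt | hge
    · calc G r ≤ δ * G (r + s) := h r (by omega) (Or.inl hlt)
        _ ≤ δ * (δ ^ n * G S) := by gcongr; exact ih (by omega)
        _ = δ ^ (n + 1) * G S := by ring
    · have hbeyond : G (r + 7 * s) ≤ δ ^ (n + 1) * G (S - 4 * s) :=
        le_pow_mul_of_forall_ge hG hδ (R := R + 5 * s)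
          (fun r' hr' hS => h r' (by omega) (Or.inr hr')) (n + 1) (by omega)
          (by rw [Nat.succ_mul n s]; omega)
      calc G r ≤ G (r + 7 * s) := hG (by omega)
        _ ≤ δ ^ (n + 1) * G (S - 4 * s) := hbeyond
        _ ≤ δ ^ (n + 1) * G S := by gcongr; exact hG (by omega)

variable {Λ : Finset (Fin d → ℤ)} {γ E : ℝ} {v u : (Fin d → ℤ) → ℝ} {s S n : ℕ} {δ κ : ℝ}
  {x b : Fin d → ℤ}

lemma localMax_le_of_isRegular (hδ : 0 ≤ δ) {r : ℕ}
    (hu : ∀ y ∈ Λ, supDist x y < S → SolvesAt Λ γ v E u y) (hr : r + s ≤ S)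
    (hreg : ∀ w ∈ ball Λ x r, IsRegular Λ γ v E s δ w) :
    localMax Λ u x r ≤ δ * localMax Λ u x (r + s) :=
  localMax_le (mul_nonneg hδ localMax_nonneg) fun w hw =>
    (hreg w hw).abs_le_localMax hδ hu (mem_ball.1 hw).2 hr

lemma localMax_le_of_not_hasQuasimode (hs : 1 ≤ s) (hκ : 0 < κ) (hκ1 : κ < 1) {r : ℕ}
    (hq : ¬ HasQuasimode Λ γ v E s κ b)
    (hreg : ∀ w ∈ Λ, supDist x w + s ≤ S → 2 * s < supDist b w → IsRegular Λ γ v E s (κ ^ 2) w)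
    (hu : ∀ y ∈ Λ, supDist x y < S → SolvesAt Λ γ v E u y) (hr : r + 5 * s ≤ S)
    (hb : supDist x b + 5 * s ≤ r) :
    localMax Λ u x r ≤ κ ^ 2 * localMax Λ u x (r + s) := by
  have hball : localMax Λ u b (5 * s) ≤ localMax Λ u x r := localMax_le_localMax hb
  have hmax : localMax Λ u x r ≤ max (κ ^ 2 * localMax Λ u x (r + s)) (κ * localMax Λ u x r) := by
    refine localMax_le (le_max_of_le_right (mul_nonneg hκ.le localMax_nonneg)) fun w hw => ?_
    obtain ⟨hwΛ, hxw⟩ := mem_ball.1 hw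
    rcases lt_or_ge (2 * s) (supDist b w) with hbw | hbw
    · exact le_max_of_le_left
        ((hreg w hwΛ (by omega) hbw).abs_le_localMax (sq_nonneg κ) hu hxw (by omega))
    · refine le_max_of_le_right ((abs_le_of_not_hasQuasimode hs hκ hκ1 hq ?_ ?_
        (mem_ball.2 ⟨hwΛ, hbw⟩)).trans (mul_le_mul_of_nonneg_left hball hκ.le))
      · intro z hz hbz
        obtain ⟨hzΛ, hbz'⟩ := mem_ball.1 hz
        have := supDist_triangle x b z
        exact hreg z hzΛ (by omega) hbz
      · intro y hy hby
        have := supDist_triangle x b y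
        exact hu y hy (by omega)
  rcases le_max_iff.1 hmax with h | h
  · exact h
  · have hzero : localMax Λ u x r ≤ 0 := by nlinarith
    exact hzero.trans (mul_nonneg (sq_nonneg κ) localMax_nonneg)

lemma IsSingular.exists_isSingular_or_hasQuasimode (h : IsSingular Λ γ v E S (κ ^ n) x)
    (hx : x ∈ Λ) (hs : 1 ≤ s) (hκ : 0 < κ) (hκ1 : κ < 1) (hn : n * s + 12 * s ≤ S) :
    (∃ w₁ ∈ Λ, ∃ w₂ ∈ Λ, supDist x w₁ + s ≤ S ∧ supDist x w₂ + s ≤ S ∧ 2 * s < supDist w₁ w₂ ∧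
      IsSingular Λ γ v E s κ w₁ ∧ IsSingular Λ γ v E s κ w₂) ∨
    ∃ b ∈ Λ, supDist x b + 5 * s ≤ S ∧ HasQuasimode Λ γ v E s κ b := by
  by_contra! ⟨hpair, hmode⟩
  refine h fun u hu => ?_
  obtain ⟨R, hR⟩ : ∃ R, ∀ r, r + 5 * s ≤ S → (r + 2 * s < R ∨ R + 5 * s ≤ r) →
      localMax Λ u x r ≤ κ ^ 2 * localMax Λ u x (r + s) := by
    by_cases hb : ∃ b ∈ Λ, supDist x b + 5 * s ≤ S ∧ IsSingular Λ γ v E s κ b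
    · obtain ⟨b, hbΛ, hxb, hbsing⟩ := hb
      have hreg : ∀ w ∈ Λ, supDist x w + s ≤ S → 2 * s < supDist b w →
          IsRegular Λ γ v E s (κ ^ 2) w := fun w hw hxw hbw =>
        not_not.1 (hpair b hbΛ w hw (by omega) hxw hbw hbsing)
      refine ⟨supDist x b, fun r hr hrb => hrb.elim (fun hlt => ?_) fun hge =>
        localMax_le_of_not_hasQuasimode hs hκ hκ1 (hmode b hbΛ hxb) hreg hu hr hge⟩
      refine localMax_le_of_isRegular (sq_nonneg κ) hu (by omega) fun w hw => ?_
      obtain ⟨hwΛ, hxw⟩ := mem_ball.1 hw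
      have := supDist_triangle x w b
      exact hreg w hwΛ (by omega) (by rw [supDist_comm]; omega)
    · push Not at hb
      refine ⟨0, fun r hr _ => localMax_le_of_isRegular (sq_nonneg κ) hu (by omega) fun w hw => ?_⟩
      obtain ⟨hwΛ, hxw⟩ := mem_ball.1 hw
      exact not_not.1 (hb w hwΛ (by omega))
  calc |u x| ≤ localMax Λ u x 0 := abs_le_localMax (mem_ball_self hx)
    _ ≤ (κ ^ 2) ^ n * localMax Λ u x S :=
      le_pow_mul_of_forall_off_gap localMax_mono (sq_nonneg κ) hR n (by omega)
    _ = (κ ^ n) ^ 2 * localMax Λ u x S := by ring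

end DeterministicStep

/-! ### Propagation of large values along a coordinate direction -/

section Propagation

variable {Λ : Finset (Fin d → ℤ)} {γ E : ℝ} {v u : (Fin d → ℤ) → ℝ} {σ : ℤ} {i₀ : Fin d}
  {w y z : Fin d → ℤ}

lemma natAbs_sub_eq_one_of_dist1_eq_one (h : dist1 w y = 1) (hne : w i₀ ≠ y i₀) :
    (w i₀ - y i₀).natAbs = 1 ∧ ∀ i, i ≠ i₀ → w i = y i := by
  have hsplit : (w i₀ - y i₀).natAbs + ∑ i ∈ Finset.univ.erase i₀, (w i - y i).natAbs = 1 :=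
    h ▸ Finset.add_sum_erase _ (fun i => (w i - y i).natAbs) (Finset.mem_univ i₀)
  refine ⟨by omega, fun i hi => ?_⟩
  have hle := Finset.single_le_sum (f := fun i => (w i - y i).natAbs)
    (fun _ _ => Nat.zero_le _) (Finset.mem_erase.2 ⟨hi, Finset.mem_univ i⟩)
  omega

lemma dist1_add_single (hσ : σ = 1 ∨ σ = -1) (z : Fin d → ℤ) :
    dist1 (z + Pi.single i₀ σ) z = 1 := by
  have hsingle (i : Fin d) : ((Pi.single i₀ σ : Fin d → ℤ) i).natAbs = if i = i₀ then 1 else 0 := by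
    rcases eq_or_ne i i₀ with rfl | hi
    · rcases hσ with rfl | rfl <;> simp
    · simp [hi]
  simp [dist1, hsingle]

lemma mul_lt_mul_of_dist1_add_single_eq_one (hσ : σ = 1 ∨ σ = -1)
    (h : dist1 (z + Pi.single i₀ σ) y = 1) (hyz : y ≠ z) : σ * z i₀ < σ * y i₀ := by
  by_contra! hle
  have hne : (z + Pi.single i₀ σ : Fin d → ℤ) i₀ ≠ y i₀ := by
    rw [Pi.add_apply, Pi.single_eq_same]
    rcases hσ with rfl | rfl <;> omega
  obtain ⟨hstep, hrest⟩ := natAbs_sub_eq_one_of_dist1_eq_one h hne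
  refine hyz (funext fun i => ?_)
  rcases eq_or_ne i i₀ with rfl | hi
  · rw [Pi.add_apply, Pi.single_eq_same] at hstep
    rcases hσ with rfl | rfl <;> omega
  · simpa [hi] using (hrest i hi).symm

lemma SolvesAt.exists_le_abs (h : SolvesAt Λ γ v E u w) (hz : z ∈ neighbors Λ w) (hγ : 0 < γ)
    (hγ1 : γ ≤ 1) (hE : |2 * d * γ + v w - E| ≤ 3) :
    ∃ y ∈ insert w ((neighbors Λ w).erase z), γ / (3 ^ d + 3) * |u z| ≤ |u y| := by
  by_contra! hlt
  set c := γ / (3 ^ d + 3) * |u z| with hc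
  have hc0 : 0 ≤ c := by positivity
  have hw : |u w| < c := hlt w (Finset.mem_insert_self _ _)
  have hrest : |∑ y ∈ (neighbors Λ w).erase z, u y| ≤ 3 ^ d * c :=
    abs_sum_le_of_subset_neighbors (Finset.erase_subset _ _) hc0 fun y hy =>
      (hlt y (Finset.mem_insert_of_mem hy)).le
  have hsolve : γ * u z =
      (2 * d * γ + v w - E) * u w - γ * ∑ y ∈ (neighbors Λ w).erase z, u y := by
    rw [SolvesAt, ← Finset.add_sum_erase _ _ hz] at h
    linear_combination -h
  have hz_le : γ * |u z| ≤ 3 * |u w| + 3 ^ d * c :=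
    calc γ * |u z| = |γ * u z| := by rw [abs_mul, abs_of_pos hγ]
      _ ≤ |2 * d * γ + v w - E| * |u w| + γ * |∑ y ∈ (neighbors Λ w).erase z, u y| := by
        rw [hsolve, ← abs_mul, ← abs_of_pos hγ, ← abs_mul, abs_of_pos hγ]
        exact abs_sub _ _
      _ ≤ 3 * |u w| + 1 * (3 ^ d * c) := by gcongr
      _ = 3 * |u w| + 3 ^ d * c := by rw [one_mul]
  have hcz : (3 ^ d + 3) * c = γ * |u z| := by rw [hc]; field_simp
  linarith

lemma SolvesAt.exists_le_abs_forward
    (h : SolvesAt Λ γ v E u (z + Pi.single i₀ σ)) (hσ : σ = 1 ∨ σ = -1) (hγ : 0 < γ) (hγ1 : γ ≤ 1)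
    (hz : z ∈ Λ) (hw : z + Pi.single i₀ σ ∈ Λ) (hE : |2 * d * γ + v (z + Pi.single i₀ σ) - E| ≤ 3) :
    ∃ y ∈ ball Λ (z + Pi.single i₀ σ) 1, σ * z i₀ < σ * y i₀ ∧
      γ / (3 ^ d + 3) * |u z| ≤ |u y| := by
  obtain ⟨y, hy, hle⟩ := h.exists_le_abs
    (Finset.mem_filter.2 ⟨hz, dist1_add_single hσ z⟩) hγ hγ1 hE
  rcases Finset.mem_insert.1 hy with rfl | hy
  · refine ⟨_, mem_ball_self hw, ?_, hle⟩
    rw [Pi.add_apply, Pi.single_eq_same]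
    rcases hσ with rfl | rfl <;> omega
  · obtain ⟨hyz, hyw⟩ := Finset.mem_erase.1 hy
    exact ⟨y, neighbors_subset_ball _ _ hyw,
      mul_lt_mul_of_dist1_add_single_eq_one hσ (Finset.mem_filter.1 hyw).2 hyz, hle⟩

end Propagation

section Paths

/-- The sublists of all paths with `n` sites that start at `z` and move at each step by `e` plus a
displacement of sup-norm at most `1`. -/
def pathSublists (e : Fin d → ℤ) : ℕ → (Fin d → ℤ) → Finset (List (Fin d → ℤ))
  | 0, _ => {[]}
  | n + 1, z =>
    ((cube (z + e) 1).biUnion fun y => pathSublists e n y) ∪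
      ((cube (z + e) 1).biUnion fun y => pathSublists e n y).image (List.cons z)

lemma card_pathSublists_le (e : Fin d → ℤ) (n : ℕ) (z : Fin d → ℤ) :
    (pathSublists e n z).card ≤ (2 * 3 ^ d) ^ n := by
  induction n generalizing z with
  | zero => simp [pathSublists]
  | succ n ih =>
    rw [pathSublists]
    set X := (cube (z + e) 1).biUnion fun y => pathSublists e n y
    have hXcard : X.card ≤ 3 ^ d * (2 * 3 ^ d) ^ n :=
      (Finset.card_biUnion_le_card_mul _ _ _ fun y _ => ih y).trans_eq (by rw [card_cube])
    calc (X ∪ X.image (List.cons z)).card ≤ X.card + X.card :=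
          (Finset.card_union_le _ _).trans (Nat.add_le_add_left Finset.card_image_le _)
      _ ≤ 3 ^ d * (2 * 3 ^ d) ^ n + 3 ^ d * (2 * 3 ^ d) ^ n := by gcongr
      _ = (2 * 3 ^ d) ^ (n + 1) := by ring

variable {e y z : Fin d → ℤ} {n : ℕ} {l : List (Fin d → ℤ)}

lemma mem_pathSublists_succ (hl : l ∈ pathSublists e n y) (hy : supDist (z + e) y ≤ 1) :
    l ∈ pathSublists e (n + 1) z :=
  Finset.mem_union_left _ (Finset.mem_biUnion.2 ⟨y, mem_cube.2 hy, hl⟩)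

lemma cons_mem_pathSublists_succ (hl : l ∈ pathSublists e n y) (hy : supDist (z + e) y ≤ 1) :
    z :: l ∈ pathSublists e (n + 1) z :=
  Finset.mem_union_right _ (Finset.mem_image_of_mem _
    (Finset.mem_biUnion.2 ⟨y, mem_cube.2 hy, hl⟩))

lemma nil_mem_pathSublists (e : Fin d → ℤ) (n : ℕ) (z : Fin d → ℤ) :
    [] ∈ pathSublists e n z := by
  induction n generalizing z with
  | zero => simp [pathSublists]
  | succ n ih => exact mem_pathSublists_succ (ih (z + e)) (by simp)

/-- The `j`-th entry `z` of the list (counted from `i`) satisfies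
`η ^ (2 j + 1) ≤ |u z| ≤ η ^ (2 j)`: the moduli of `u` along the list are separated by factors
of at least `η`. -/
def HasAmplitudes {α : Type*} (η : ℝ) (u : α → ℝ) : ℕ → List α → Prop
  | _, [] => True
  | i, z :: l => η ^ (2 * i + 1) ≤ |u z| ∧ |u z| ≤ η ^ (2 * i) ∧ HasAmplitudes η u (i + 1) l

-- Follow `hstep` from `z`, losing at most a factor `η` per step, until the modulus drops to `κ`.
-- A site is selected when the modulus has entered the next amplitude class; since the sites ascend
-- in `height` and large values stay below height `H`, the walk must pass all classes above `κ`.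
lemma exists_mem_pathSublists_hasAmplitudes {A : Set (Fin d → ℤ)} {height : (Fin d → ℤ) → ℤ}
    {H : ℤ} {u : (Fin d → ℤ) → ℝ} {η κ : ℝ} (hη0 : 0 < η) (hη1 : η ≤ 1)
    (hstep : ∀ z ∈ A, κ < |u z| → height z < H ∧
      ∃ y ∈ A, supDist (z + e) y ≤ 1 ∧ height z < height y ∧ η * |u z| ≤ |u y|)
    (n i m : ℕ) (hz : z ∈ A) (hn : H ≤ height z + n) (hzi : η ^ (2 * i + 1) ≤ |u z|)
    (hκ : κ < η ^ (2 * (i + m) + 1)) :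
    ∃ l ∈ pathSublists e n z, l.length = m ∧ l.Nodup ∧ HasAmplitudes η u i l ∧
      ∀ y ∈ l, y ∈ A ∧ κ < |u y| ∧ height z ≤ height y := by
  have hpow {j k : ℕ} (h : j ≤ k) : η ^ k ≤ η ^ j := pow_le_pow_of_le_one hη0.le hη1 h
  induction n generalizing i m z with
  | zero =>
    have := (hstep z hz (hκ.trans_le ((hpow (by omega)).trans hzi))).1
    omega
  | succ n ih =>
    rcases m with _ | m
    · exact ⟨[], nil_mem_pathSublists _ _ _, rfl, List.nodup_nil, trivial, by simp⟩
    have hκz : κ < |u z| := hκ.trans_le ((hpow (by omega)).trans hzi)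
    obtain ⟨-, y, hyA, hyz, hlt, hyu⟩ := hstep z hz hκz
    have hyi {j : ℕ} (hj : η ^ j ≤ |u z|) : η ^ (j + 1) ≤ |u y| := by
      rw [pow_succ']
      exact (mul_le_mul_of_nonneg_left hj hη0.le).trans hyu
    rcases le_or_gt |u z| (η ^ (2 * i)) with hsel | hskip
    · obtain ⟨l, hl, hlen, hnd, hamp, hall⟩ := ih (i + 1) m hyA (by omega)
        ((hpow (by omega)).trans (hyi hzi)) (by convert hκ using 2; ring)
      refine ⟨z :: l, cons_mem_pathSublists_succ hl hyz, by simp [hlen],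
        List.nodup_cons.2 ⟨fun hzl => ?_, hnd⟩, ⟨hzi, hsel, hamp⟩,
        List.forall_mem_cons.2 ⟨⟨hz, hκz, le_rfl⟩, fun y' hy' => ?_⟩⟩
      · exact absurd (hall z hzl).2.2 (by omega)
      · obtain ⟨hA, hκy, hle⟩ := hall y' hy'
        exact ⟨hA, hκy, by omega⟩
    · obtain ⟨l, hl, hlen, hnd, hamp, hall⟩ := ih i (m + 1) hyA (by omega) (hyi hskip.le) hκ
      refine ⟨l, mem_pathSublists_succ hl hyz, hlen, hnd, hamp, fun y' hy' => ?_⟩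
      obtain ⟨hA, hκy, hle⟩ := hall y' hy'
      exact ⟨hA, hκy, by omega⟩

end Paths

/-! ### Comparison of two quasimodes -/

section Amplitudes

variable {α : Type*} {η c : ℝ} {u u' a : α → ℝ} {i : ℕ} {z : α} {l : List α}

lemma abs_mul_le_pow (h : |u z| ≤ η ^ (2 * i)) (h' : |u' z| ≤ η ^ (2 * i)) :
    |u z * u' z| ≤ η ^ (4 * i) := by
  rw [abs_mul, show 4 * i = 2 * i + 2 * i by ring, pow_add]
  exact mul_le_mul h h' (abs_nonneg _) ((abs_nonneg _).trans h)

lemma pow_le_abs_mul (hη : 0 ≤ η) (h : η ^ (2 * i + 1) ≤ |u z|) (h' : η ^ (2 * i + 1) ≤ |u' z|) :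
    η ^ (4 * i + 2) ≤ |u z * u' z| := by
  rw [abs_mul, show 4 * i + 2 = (2 * i + 1) + (2 * i + 1) by ring, pow_add]
  exact mul_le_mul h h' (by positivity) (abs_nonneg _)

lemma HasAmplitudes.abs_sum_mul_le (hη : 4 * η ^ 2 ≤ 1) (ha : ∀ w ∈ l, |a w| ≤ 1)
    (hu : HasAmplitudes η u i l) (hu' : HasAmplitudes η u' i l) :
    |(l.map fun w => a w * (u w * u' w)).sum| ≤ 2 * η ^ (4 * i) := by
  induction l generalizing i with
  | nil => simpa using (even_two_mul (2 * i)).pow_nonneg η |>.trans_eq (by ring_nf)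
  | cons z l ih =>
    obtain ⟨haz, hal⟩ := List.forall_mem_cons.1 ha
    have hpow : 0 ≤ η ^ (4 * i) := Even.pow_nonneg ⟨2 * i, by ring⟩ η
    have hhead : |a z * (u z * u' z)| ≤ 1 * η ^ (4 * i) := by
      rw [abs_mul]
      exact mul_le_mul haz (abs_mul_le_pow hu.2.1 hu'.2.1) (abs_nonneg _) zero_le_one
    have htail : 2 * η ^ (4 * (i + 1)) ≤ η ^ (4 * i) := by
      rw [show 2 * η ^ (4 * (i + 1)) = 2 * (η ^ 2) ^ 2 * η ^ (4 * i) by ring]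
      exact mul_le_of_le_one_left hpow (by nlinarith [sq_nonneg η])
    calc |((z :: l).map fun w => a w * (u w * u' w)).sum|
        ≤ |a z * (u z * u' z)| + |(l.map fun w => a w * (u w * u' w)).sum| := by
          rw [List.map_cons, List.sum_cons]
          exact abs_add_le _ _
      _ ≤ 1 * η ^ (4 * i) + 2 * η ^ (4 * (i + 1)) := add_le_add hhead (ih hal hu.2.2 hu'.2.2)
      _ ≤ 2 * η ^ (4 * i) := by linarith

-- The first entry with `a ≠ 0` dominates the sum of all later ones.
lemma HasAmplitudes.le_abs_sum_mul (hη0 : 0 < η) (hη : 4 * η ^ 2 ≤ c) (hc : c ≤ 1)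
    (ha : ∀ w ∈ l, |a w| ≤ 1) (hac : ∀ w ∈ l, a w = 0 ∨ c ≤ |a w|)
    (hu : HasAmplitudes η u i l) (hu' : HasAmplitudes η u' i l) (hne : ∃ w ∈ l, a w ≠ 0) :
    c / 2 * η ^ (4 * (i + l.length)) ≤ |(l.map fun w => a w * (u w * u' w)).sum| := by
  induction l generalizing i with
  | nil => simp at hne
  | cons z l ih =>
    obtain ⟨-, hal⟩ := List.forall_mem_cons.1 ha
    obtain ⟨hacz, hacl⟩ := List.forall_mem_cons.1 hac
    rw [List.map_cons, List.sum_cons,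
      show i + (z :: l).length = i + 1 + l.length by rw [List.length_cons]; ring]
    rcases hacz with haz | haz
    · rw [haz, zero_mul, zero_add]
      refine ih hal hacl hu.2.2 hu'.2.2 ?_
      simpa [haz] using hne
    have htail := HasAmplitudes.abs_sum_mul_le (hη.trans hc) hal hu.2.2 hu'.2.2
    set D := (l.map fun w => a w * (u w * u' w)).sum
    have hc0 : 0 < c := (by positivity : 0 < 4 * η ^ 2).trans_le hη
    have hη1 : η ≤ 1 := by nlinarith
    have hhead : c * η ^ (4 * i + 2) ≤ |a z * (u z * u' z)| := by
      rw [abs_mul]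
      exact mul_le_mul haz (pow_le_abs_mul hη0.le hu.1 hu'.1) (by positivity) (abs_nonneg _)
    have hdom : 2 * η ^ (4 * (i + 1)) ≤ c / 2 * η ^ (4 * i + 2) := by
      rw [show 2 * η ^ (4 * (i + 1)) = 2 * η ^ 2 * η ^ (4 * i + 2) by ring]
      gcongr
      linarith
    calc c / 2 * η ^ (4 * (i + 1 + l.length)) ≤ c / 2 * η ^ (4 * i + 2) := by
          gcongr c / 2 * ?_
          exact pow_le_pow_of_le_one hη0.le hη1 (by omega)
      _ ≤ |a z * (u z * u' z)| - |D| := by linarith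
      _ ≤ |a z * (u z * u' z) + D| := by
        simpa using abs_sub_abs_le_abs_sub (a z * (u z * u' z)) (-D)

end Amplitudes

section Green

variable {Λ S : Finset (Fin d → ℤ)} {γ E E' κ : ℝ} {v v' u u' : (Fin d → ℤ) → ℝ}
  {w : Fin d → ℤ}

lemma SolvesAt.sub_mul_mul (h : SolvesAt Λ γ v E u w) (h' : SolvesAt Λ γ v' E' u' w) :
    (v w - v' w) * (u w * u' w) = (E - E') * (u w * u' w) +
      γ * ∑ y ∈ neighbors Λ w, (u' w * u y - u w * u' y) := by
  rw [SolvesAt] at h h'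
  rw [Finset.sum_sub_distrib, ← Finset.mul_sum, ← Finset.mul_sum]
  linear_combination u' w * h - u w * h'

lemma sum_sum_neighbors_eq_zero {f : (Fin d → ℤ) → (Fin d → ℤ) → ℝ}
    (hf : ∀ w y, f y w = -f w y) : ∑ w ∈ S, ∑ y ∈ neighbors S w, f w y = 0 := by
  have hswap : ∑ w ∈ S, ∑ y ∈ neighbors S w, f w y = ∑ y ∈ S, ∑ w ∈ neighbors S y, f w y :=
    Finset.sum_comm' fun w y => by simp only [neighbors, Finset.mem_filter, dist1_comm w y]; tauto
  have hneg : ∑ w ∈ S, ∑ y ∈ neighbors S w, f y w = -∑ w ∈ S, ∑ y ∈ neighbors S w, f w y := by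
    simp_rw [← Finset.sum_neg_distrib, ← hf]
  linarith

lemma sum_sum_neighbors_eq_boundary (hS : S ⊆ Λ) {f : (Fin d → ℤ) → (Fin d → ℤ) → ℝ}
    (hf : ∀ w y, f y w = -f w y) :
    ∑ w ∈ S, ∑ y ∈ neighbors Λ w, f w y = ∑ w ∈ S, ∑ y ∈ neighbors Λ w with y ∉ S, f w y := by
  have hinner (w : Fin d → ℤ) : {y ∈ neighbors Λ w | y ∈ S} = neighbors S w := by
    ext y
    simp only [neighbors, Finset.mem_filter]
    have := @hS y
    tauto
  simp_rw [← Finset.sum_filter_add_sum_filter_not (neighbors Λ _) (· ∈ S), hinner,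
    Finset.sum_add_distrib, sum_sum_neighbors_eq_zero hf, zero_add]

-- Green's identity: the interior of the Wronskian sum cancels by antisymmetry.
lemma abs_sum_sub_mul_mul_le (hS : S ⊆ Λ) (hγ : 0 < γ) (hκ : 0 ≤ κ)
    (h : ∀ w ∈ S, SolvesAt Λ γ v E u w) (h' : ∀ w ∈ S, SolvesAt Λ γ v' E' u' w)
    (hu : ∀ w ∈ S, |u w| ≤ 1) (hu' : ∀ w ∈ S, |u' w| ≤ 1)
    (hbdry : ∀ w ∈ S, ∀ y ∈ neighbors Λ w, y ∉ S → |u y| ≤ κ ∧ |u' y| ≤ κ) :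
    |∑ w ∈ S, (v w - v' w) * (u w * u' w)| ≤ (|E - E'| + 2 * κ * γ * 3 ^ d) * S.card := by
  have hgreen : ∑ w ∈ S, (v w - v' w) * (u w * u' w) = ∑ w ∈ S, ((E - E') * (u w * u' w) +
      γ * ∑ y ∈ neighbors Λ w with y ∉ S, (u' w * u y - u w * u' y)) := by
    rw [Finset.sum_congr rfl fun w hw => (h w hw).sub_mul_mul (h' w hw), Finset.sum_add_distrib,
      Finset.sum_add_distrib, ← Finset.mul_sum _ _ γ, ← Finset.mul_sum _ _ γ,
      sum_sum_neighbors_eq_boundary hS fun w y => by ring]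
  rw [hgreen, mul_comm, ← nsmul_eq_mul]
  refine (Finset.abs_sum_le_sum_abs _ _).trans (Finset.sum_le_card_nsmul _ _ _ fun w hw => ?_)
  have hW : ∀ y ∈ {y ∈ neighbors Λ w | y ∉ S}, |u' w * u y - u w * u' y| ≤ 2 * κ := by
    intro y hy
    obtain ⟨hyw, hyS⟩ := Finset.mem_filter.1 hy
    obtain ⟨hy1, hy2⟩ := hbdry w hw y hyw hyS
    calc |u' w * u y - u w * u' y| ≤ |u' w| * |u y| + |u w| * |u' y| := by
          rw [← abs_mul, ← abs_mul]; exact abs_sub _ _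
      _ ≤ 1 * κ + 1 * κ := by gcongr <;> simp [hu w hw, hu' w hw]
      _ = 2 * κ := by ring
  have hflux := abs_sum_le_of_subset_neighbors (Finset.filter_subset _ _) (by positivity) hW
  calc |(E - E') * (u w * u' w) + γ * ∑ y ∈ neighbors Λ w with y ∉ S, (u' w * u y - u w * u' y)|
      ≤ |E - E'| * (|u w| * |u' w|) +
        γ * |∑ y ∈ neighbors Λ w with y ∉ S, (u' w * u y - u w * u' y)| := by
        rw [← abs_mul, ← abs_mul, ← abs_of_pos hγ, ← abs_mul, abs_of_pos hγ]
        exact abs_add_le _ _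
    _ ≤ |E - E'| * (1 * 1) + γ * (3 ^ d * (2 * κ)) := by
        gcongr
        · exact hu w hw
        · exact hu' w hw
    _ = |E - E'| + 2 * κ * γ * 3 ^ d := by ring

end Green

/-! ### Uniform probability on finite spaces -/

section Prob

variable {Ω : Type*} [Fintype Ω] {A B : Ω → Prop}

open scoped Classical in
lemma prob_eq_expect (A : Ω → Prop) : prob A = expect fun ω => if A ω then 1 else 0 := by
  rw [prob, expect, Finset.sum_boole]

lemma prob_nonneg (A : Ω → Prop) : 0 ≤ prob A := by
  unfold prob
  positivity

lemma prob_mono (h : ∀ ω, A ω → B ω) : prob A ≤ prob B := by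
  unfold prob
  gcongr with ω
  exact h ω

lemma prob_const_and_le {P : Prop} {c : ℝ} (hc : 0 ≤ c) (h : P → prob A ≤ c) :
    prob (fun ω => P ∧ A ω) ≤ c := by
  by_cases hP : P
  · simpa only [hP, true_and] using h hP
  · simpa [prob, hP] using hc

lemma prob_or_le (A B : Ω → Prop) : prob (fun ω => A ω ∨ B ω) ≤ prob A + prob B := by
  classical
  have hcard : (Finset.univ.filter fun ω => A ω ∨ B ω).card ≤
      (Finset.univ.filter A).card + (Finset.univ.filter B).card := by
    rw [Finset.filter_or]
    exact Finset.card_union_le _ _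
  rw [prob, prob, prob, ← add_div]
  gcongr
  convert (Nat.cast_le (α := ℝ)).2 hcard using 1
  · congr!
  · push_cast
    congr!

lemma prob_exists_le_sum {ι : Type*} (I : Finset ι) (A : ι → Ω → Prop) :
    prob (fun ω => ∃ i ∈ I, A i ω) ≤ ∑ i ∈ I, prob (A i) := by
  classical
  induction I using Finset.induction_on with
  | empty => simp [prob]
  | insert a I ha ih =>
    rw [Finset.sum_insert ha]
    simp only [Finset.exists_mem_insert]
    exact (prob_or_le _ _).trans (by gcongr)

lemma prob_exists_le_mul {ι : Type*} (I : Finset ι) (A : ι → Ω → Prop) {n c : ℝ} (hc : 0 ≤ c)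
    (hn : (I.card : ℝ) ≤ n) (h : ∀ i ∈ I, prob (A i) ≤ c) :
    prob (fun ω => ∃ i ∈ I, A i ω) ≤ n * c :=
  calc prob (fun ω => ∃ i ∈ I, A i ω) ≤ ∑ _i ∈ I, c :=
        (prob_exists_le_sum I A).trans (Finset.sum_le_sum h)
    _ = I.card * c := by rw [Finset.sum_const, nsmul_eq_mul]
    _ ≤ n * c := by gcongr

end Prob

section Product

lemma prob_le_one_div_card_pow {ι α : Type*} [Fintype ι] [DecidableEq ι] [Fintype α] [Nonempty α]
    (T : Finset ι) (A : (ι → α) → Prop)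
    (h : ∀ ω ω', A ω → A ω' → (∀ i, i ∉ T → ω i = ω' i) → ω = ω') :
    prob A ≤ 1 / (Fintype.card α : ℝ) ^ T.card := by
  classical
  have : (0 : ℝ) < Fintype.card α := mod_cast Fintype.card_pos
  have hcard : (Finset.univ.filter A).card ≤ Fintype.card α ^ Tᶜ.card := by
    rw [← Fintype.card_coe Tᶜ, ← Fintype.card_fun, ← Finset.card_univ]
    refine Finset.card_le_card_of_injOn (fun ω i => ω i) (fun _ _ => Finset.mem_univ _) ?_
    intro ω hω ω' hω' heq
    refine h ω ω' (by simpa using hω) (by simpa using hω') fun i hi => ?_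
    exact congrFun heq ⟨i, Finset.mem_compl.2 hi⟩
  rw [prob, Fintype.card_fun, div_le_div_iff₀ (by positivity) (by positivity), one_mul]
  calc ((Finset.univ.filter A).card : ℝ) * (Fintype.card α : ℝ) ^ T.card
      ≤ (Fintype.card α ^ Tᶜ.card : ℕ) * (Fintype.card α : ℝ) ^ T.card := by gcongr
    _ = (Fintype.card α ^ Fintype.card ι : ℕ) := by
        push_cast
        rw [← pow_add, Finset.card_compl_add_card]

variable {ι : Type*} {α : ι → Type*}

lemma dependsOn_of_imp {S : Set ι} {A : (∀ i, α i) → Prop}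
    (h : ∀ ω ω', (∀ i ∈ S, ω i = ω' i) → A ω → A ω') : DependsOn A S :=
  fun ω ω' hS => propext ⟨h ω ω' hS, h ω' ω fun i hi => (hS i hi).symm⟩

variable [Fintype (∀ i, α i)]

open scoped Classical in
-- Exchanging two configurations on `Sᶜ` is an involution of the pairs.
lemma sum_sum_piecewise (S : Set ι) (f : (∀ i, α i) → ℝ) :
    ∑ ω, ∑ ω', f (S.piecewise ω ω') = Fintype.card (∀ i, α i) * ∑ ω, f ω := by
  let swap (p : (∀ i, α i) × (∀ i, α i)) := (S.piecewise p.1 p.2, S.piecewise p.2 p.1)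
  have hswap : Function.Involutive swap := fun p => by
    ext i <;> by_cases hi : i ∈ S <;> simp [swap, hi]
  calc ∑ ω, ∑ ω', f (S.piecewise ω ω') = ∑ p, f (swap p).1 :=
        (Fintype.sum_prod_type fun p : (∀ i, α i) × (∀ i, α i) => f (swap p).1).symm
    _ = ∑ p : (∀ i, α i) × (∀ i, α i), f p.1 :=
        Equiv.sum_comp hswap.toPerm fun p => f p.1
    _ = Fintype.card (∀ i, α i) * ∑ ω, f ω := by
        simp only [Fintype.sum_prod_type, Finset.sum_const, Finset.card_univ, nsmul_eq_mul,
          Finset.mul_sum]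

variable [∀ i, Nonempty (α i)]

lemma prob_and_eq_mul {S T : Set ι} {A B : (∀ i, α i) → Prop} (hA : DependsOn A S)
    (hB : DependsOn B T) (hST : Disjoint S T) :
    prob (fun ω => A ω ∧ B ω) = prob A * prob B := by
  classical
  have hmix (ω ω' : ∀ i, α i) : (if A (S.piecewise ω ω') ∧ B (S.piecewise ω ω') then (1 : ℝ) else 0)
      = (if A ω then 1 else 0) * (if B ω' then 1 else 0) := by
    have hAmix : A (S.piecewise ω ω') = A ω := hA fun i hi => Set.piecewise_eq_of_mem _ _ _ hi
    have hBmix : B (S.piecewise ω ω') = B ω' := hB fun i hi =>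
      Set.piecewise_eq_of_notMem _ _ _ (hST.notMem_of_mem_right hi)
    simp only [hAmix, hBmix, ite_and, ite_mul, one_mul, zero_mul]
  have : (0 : ℝ) < Fintype.card (∀ i, α i) := mod_cast Fintype.card_pos
  have hsum := sum_sum_piecewise S fun ω : ∀ i, α i => if A ω ∧ B ω then (1 : ℝ) else 0
  simp only [hmix, ← Finset.mul_sum, ← Finset.sum_mul] at hsum
  rw [prob_eq_expect, prob_eq_expect, prob_eq_expect, expect, expect, expect, div_mul_div_comm,
    hsum]
  field_simp
  congr!

open scoped Classical in
lemma prob_le_of_forall_piecewise (S : Set ι) (A : (∀ i, α i) → Prop) {c : ℝ}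
    (h : ∀ ω, prob (fun ω' => A (S.piecewise ω ω')) ≤ c) : prob A ≤ c := by
  have hc : (0 : ℝ) < Fintype.card (∀ i, α i) := mod_cast Fintype.card_pos
  simp only [prob_eq_expect, expect, div_le_iff₀ hc] at h ⊢
  refine le_of_mul_le_mul_left ?_ hc
  calc Fintype.card (∀ i, α i) * ∑ ω, (if A ω then (1 : ℝ) else 0)
      = ∑ ω, ∑ ω', if A (S.piecewise ω ω') then (1 : ℝ) else 0 :=
        (sum_sum_piecewise S fun ω => if A ω then (1 : ℝ) else 0).symm
    _ ≤ ∑ _ω : ∀ i, α i, c * Fintype.card (∀ i, α i) := Finset.sum_le_sum fun ω _ => h ω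
    _ = Fintype.card (∀ i, α i) * (c * Fintype.card (∀ i, α i)) := by
        rw [Finset.sum_const, Finset.card_univ, nsmul_eq_mul]

end Product

section Potential

variable {N : ℕ} {Λ : Finset (Fin d → ℤ)}

lemma potential_mem_Icc (ω : Λ → Fin N) (w : Fin d → ℤ) :
    potential N Λ ω w ∈ Set.Icc (0 : ℝ) 1 := by
  rw [potential]
  split_ifs with hw
  · have hlt : ((ω ⟨w, hw⟩ : ℕ) : ℝ) + 1 ≤ N := mod_cast (ω ⟨w, hw⟩).2
    have hnonneg : (0 : ℝ) ≤ (ω ⟨w, hw⟩ : ℕ) := Nat.cast_nonneg _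
    exact ⟨div_nonneg hnonneg (by linarith), div_le_one_of_le₀ (by linarith) (by linarith)⟩
  · simp

lemma abs_potential_sub_le_one (ω ω' : Λ → Fin N) (w w' : Fin d → ℤ) :
    |potential N Λ ω w - potential N Λ ω' w'| ≤ 1 := by
  obtain ⟨h0, h1⟩ := potential_mem_Icc ω w
  obtain ⟨h0', h1'⟩ := potential_mem_Icc ω' w'
  rw [abs_le]
  constructor <;> linarith

lemma one_div_le_abs_potential_sub {ω ω' : Λ → Fin N} {w w' : Fin d → ℤ} (hw : w ∈ Λ) (hw' : w' ∈ Λ)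
    (h : ω ⟨w, hw⟩ ≠ ω' ⟨w', hw'⟩) : 1 / (N : ℝ) ≤ |potential N Λ ω w - potential N Λ ω' w'| := by
  have hne : ((ω ⟨w, hw⟩ : ℕ) : ℤ) - (ω' ⟨w', hw'⟩ : ℕ) ≠ 0 :=
    sub_ne_zero.2 fun heq => h (Fin.ext (by exact_mod_cast heq))
  have hdist : (1 : ℝ) ≤ |((ω ⟨w, hw⟩ : ℕ) : ℝ) - (ω' ⟨w', hw'⟩ : ℕ)| := by
    have := Int.one_le_abs hne
    exact_mod_cast this
  have hN : (2 : ℝ) ≤ N := by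
    have := (ω ⟨w, hw⟩).2
    have := (ω' ⟨w', hw'⟩).2
    norm_cast
    omega
  rw [potential, potential, dif_pos hw, dif_pos hw', ← sub_div, abs_div,
    abs_of_pos (by linarith : (0 : ℝ) < N - 1)]
  gcongr <;> linarith

lemma potential_congr {ω ω' : Λ → Fin N} {w : Fin d → ℤ}
    (h : ∀ hw : w ∈ Λ, ω ⟨w, hw⟩ = ω' ⟨w, hw⟩) : potential N Λ ω w = potential N Λ ω' w := by
  unfold potential
  split_ifs with hw
  · rw [h hw]
  · rfl

end Potential

/-! ### Rarity of quasimodes -/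

section Quasimode

variable {Λ : Finset (Fin d → ℤ)} {γ E E' κ η : ℝ} {v v' u u' : (Fin d → ℤ) → ℝ} {s m : ℕ}
  {a b c z : Fin d → ℤ} {i₀ : Fin d}

lemma card_ball_three_mul_le (Λ : Finset (Fin d → ℤ)) (b : Fin d → ℤ) (s : ℕ) :
    ((ball Λ b (3 * s)).card : ℝ) ≤ (6 * s + 1) ^ d := by
  have := card_ball_le Λ b (3 * s)
  rw [show 2 * (3 * s) + 1 = 6 * s + 1 by ring] at this
  exact_mod_cast this

lemma IsQuasimode.abs_le_of_mem_neighbors (h : IsQuasimode Λ γ v E s κ b u) {w y : Fin d → ℤ}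
    (hw : w ∈ ball Λ b (3 * s)) (hy : y ∈ neighbors Λ w) (hyS : y ∉ ball Λ b (3 * s)) :
    |u y| ≤ κ := by
  obtain ⟨hyΛ, hwy⟩ := mem_ball.1 (neighbors_subset_ball Λ w hy)
  have hby := supDist_triangle b w y
  have hbw := (mem_ball.1 hw).2
  have hfar : 3 * s < supDist b y := not_le.1 fun hle => hyS (mem_ball.2 ⟨hyΛ, hle⟩)
  exact h.abs_le_of_le_supDist y (mem_ball.2 ⟨hyΛ, by omega⟩) hfar.le

lemma IsQuasimode.abs_sum_sub_mul_mul_le (h : IsQuasimode Λ γ v E s κ b u)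
    (h' : IsQuasimode Λ γ v' E' s κ b u') (hγ : 0 < γ) (hκ : 0 ≤ κ) :
    |∑ w ∈ ball Λ b (3 * s), (v w - v' w) * (u w * u' w)| ≤
      (|E - E'| + 2 * κ * γ * 3 ^ d) * (6 * s + 1) ^ d := by
  have hsub : ball Λ b (3 * s) ⊆ ball Λ b (3 * s + 1) := ball_subset_ball (by simp)
  exact (Anderson.abs_sum_sub_mul_mul_le (ball_subset Λ b _) hγ hκ h.solvesAt h'.solvesAt
    (fun w hw => h.abs_le_one w (hsub hw)) (fun w hw => h'.abs_le_one w (hsub hw))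
    fun w hw y hy hyS => ⟨h.abs_le_of_mem_neighbors hw hy hyS,
      h'.abs_le_of_mem_neighbors hw hy hyS⟩).trans
    (by gcongr; exact card_ball_three_mul_le Λ b s)

lemma IsQuasimode.abs_diag_sub_energy_le (h : IsQuasimode Λ γ v E s κ b u) (hγ : 0 < γ)
    (hz : z ∈ ball Λ b (2 * s)) (hz1 : |u z| = 1) : |2 * d * γ + v z - E| ≤ γ * 3 ^ d := by
  obtain ⟨hzΛ, hbz⟩ := mem_ball.1 hz
  have hsum : |∑ y ∈ neighbors Λ z, u y| ≤ 3 ^ d * 1 :=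
    abs_sum_le_of_subset_neighbors subset_rfl zero_le_one fun y hy =>
      h.abs_le_one y (ball_subset_ball (by omega) (neighbors_subset_ball Λ z hy))
  calc |2 * d * γ + v z - E| = |(2 * d * γ + v z - E) * u z| := by rw [abs_mul, hz1, mul_one]
    _ = γ * |∑ y ∈ neighbors Λ z, u y| := by
      rw [h.solvesAt z (mem_ball.2 ⟨hzΛ, by omega⟩), abs_mul, abs_of_pos hγ]
    _ ≤ γ * (3 ^ d * 1) := by gcongr
    _ = γ * 3 ^ d := by rw [mul_one]

lemma add_single_mem_Icc {σ : ℤ} (hz : z ∈ Finset.Icc a c) (ha : a i₀ ≤ z i₀ + σ)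
    (hc : z i₀ + σ ≤ c i₀) : z + Pi.single i₀ σ ∈ Finset.Icc a c := by
  rw [Finset.mem_Icc, Pi.le_def, Pi.le_def] at hz ⊢
  refine ⟨fun i => ?_, fun i => ?_⟩ <;> rcases eq_or_ne i i₀ with rfl | hi
  · simpa using ha
  · simpa [hi] using hz.1 i
  · simpa using hc
  · simpa [hi] using hz.2 i

lemma exists_forall_add_single_mem_Icc (hside : a i₀ + 6 * s ≤ c i₀) (b : Fin d → ℤ) :
    ∃ σ : ℤ, (σ = 1 ∨ σ = -1) ∧
      ∀ z ∈ Finset.Icc a c, supDist b z < 3 * s → z + Pi.single i₀ σ ∈ Finset.Icc a c := by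
  have hcoord {z : Fin d → ℤ} (hz : z ∈ Finset.Icc a c) (hbz : supDist b z < 3 * s) :
      a i₀ ≤ z i₀ ∧ z i₀ ≤ c i₀ ∧ (b i₀ - z i₀).natAbs < 3 * s :=
    ⟨(Finset.mem_Icc.1 hz).1 i₀, (Finset.mem_Icc.1 hz).2 i₀,
      (natAbs_sub_le_supDist b z i₀).trans_lt hbz⟩
  rcases le_total (b i₀ + 3 * s) (c i₀) with hb | hb
  · refine ⟨1, Or.inl rfl, fun z hz hbz => add_single_mem_Icc hz ?_ ?_⟩ <;>
    · have := hcoord hz hbz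
      omega
  · refine ⟨-1, Or.inr rfl, fun z hz hbz => add_single_mem_Icc hz ?_ ?_⟩ <;>
    · have := hcoord hz hbz
      omega

lemma IsQuasimode.mem_and_supDist_lt (h : IsQuasimode Λ γ v E s κ b u) {w : Fin d → ℤ}
    (hw : w ∈ ball Λ b (3 * s + 1)) (hκw : κ < |u w|) : w ∈ Λ ∧ supDist b w < 3 * s :=
  ⟨(mem_ball.1 hw).1, not_le.1 fun hfar => (h.abs_le_of_le_supDist w hw hfar).not_gt hκw⟩

lemma IsQuasimode.exists_le_abs_forward (h : IsQuasimode Λ γ v E s κ b u) {σ : ℤ}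
    (hσ : σ = 1 ∨ σ = -1) (hroom : ∀ w ∈ Λ, supDist b w < 3 * s → w + Pi.single i₀ σ ∈ Λ)
    (hγ : 0 < γ) (hγ1 : γ ≤ 1) (hE : ∀ w, |2 * d * γ + v w - E| ≤ 3) {w : Fin d → ℤ}
    (hw : w ∈ ball Λ b (3 * s + 1)) (hκw : κ < |u w|) :
    ∃ y ∈ ball Λ b (3 * s + 1), supDist (w + Pi.single i₀ σ) y ≤ 1 ∧ σ * w i₀ < σ * y i₀ ∧
      γ / (3 ^ d + 3) * |u w| ≤ |u y| := by
  obtain ⟨hwΛ, hbw⟩ := h.mem_and_supDist_lt hw hκw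
  have hw' := hroom w hwΛ hbw
  have hbw' : supDist b (w + Pi.single i₀ σ) ≤ 3 * s := by
    have := supDist_triangle b w (w + Pi.single i₀ σ)
    have := supDist_le_dist1 w (w + Pi.single i₀ σ)
    rw [dist1_comm, dist1_add_single hσ] at this
    omega
  obtain ⟨y, hy, hlt, hle⟩ := (h.solvesAt _ (mem_ball.2 ⟨hw', hbw'⟩)).exists_le_abs_forward
    hσ hγ hγ1 hwΛ hw' (hE _)
  exact ⟨y, ball_subset_ball (by omega) hy, (mem_ball.1 hy).2, hlt, hle⟩

-- A solution large at `z` is large at some site of the next layer, up to the boundary of the box,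
-- where it is small: so on the way it passes through all amplitude classes.
lemma IsQuasimode.exists_hasAmplitudes (h : IsQuasimode Λ γ v E s κ b u) {σ : ℤ}
    (hσ : σ = 1 ∨ σ = -1) (hroom : ∀ w ∈ Λ, supDist b w < 3 * s → w + Pi.single i₀ σ ∈ Λ)
    (hγ : 0 < γ) (hγ3 : γ * 3 ^ d ≤ 1) (hv : ∀ w w', |v w - v w'| ≤ 1) (hη0 : 0 < η)
    (hηγ : η * (3 ^ d + 3) ≤ γ) (hκ : κ < η ^ (2 * m + 1)) (hz : z ∈ ball Λ b (2 * s))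
    (hz1 : |u z| = 1) :
    ∃ l ∈ pathSublists (Pi.single i₀ σ) (5 * s) z, l.length = m ∧ l.Nodup ∧
      HasAmplitudes η u 0 l ∧ ∀ y ∈ l, y ∈ ball Λ b (3 * s) := by
  have h3 : (1 : ℝ) ≤ 3 ^ d := one_le_pow₀ (by norm_num)
  have hγ1 : γ ≤ 1 := by nlinarith
  have hη1 : η ≤ 1 := by nlinarith
  have hηle : η ≤ γ / (3 ^ d + 3) := by rwa [le_div_iff₀ (by positivity)]
  have hE (w : Fin d → ℤ) : |2 * d * γ + v w - E| ≤ 3 := by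
    have hz := h.abs_diag_sub_energy_le hγ hz hz1
    have hw := hv w z
    rw [abs_le] at hz hw ⊢
    constructor <;> linarith
  have hbound (w : Fin d → ℤ) (hw : supDist b w < 3 * s) : σ * w i₀ < σ * b i₀ + 3 * s := by
    have := natAbs_sub_le_supDist b w i₀
    rcases hσ with rfl | rfl <;> omega
  obtain ⟨hzΛ, hbz⟩ := mem_ball.1 hz
  obtain ⟨l, hl, hlen, hnd, hamp, hall⟩ := exists_mem_pathSublists_hasAmplitudes
    (A := (ball Λ b (3 * s + 1) : Set (Fin d → ℤ))) hη0 hη1 (fun w hw hκw => by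
      obtain ⟨y, hy, hyw, hlt, hle⟩ := h.exists_le_abs_forward hσ hroom hγ hγ1 hE hw hκw
      exact ⟨hbound w (h.mem_and_supDist_lt hw hκw).2, y, hy, hyw, hlt,
        (mul_le_mul_of_nonneg_right hηle (abs_nonneg _)).trans hle⟩)
    (5 * s) 0 m (z := z) (mem_ball.2 ⟨hzΛ, by omega⟩)
    (by have := natAbs_sub_le_supDist b z i₀
        rcases hσ with rfl | rfl <;> push_cast <;> omega)
    (by simpa [hz1] using hη1) (by simpa using hκ)
  refine ⟨l, hl, hlen, hnd, hamp, fun y hy => ?_⟩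
  obtain ⟨hyA, hκy, -⟩ := hall y hy
  exact mem_ball.2 ((h.mem_and_supDist_lt hyA hκy).imp_right le_of_lt)

end Quasimode

section Wegner

variable {N : ℕ} {Λ : Finset (Fin d → ℤ)} {γ κ η ε E₀ : ℝ} {s m : ℕ} {b : Fin d → ℤ}
  {l : List (Fin d → ℤ)}

lemma eq_of_isQuasimode_of_hasAmplitudes {ω ω' : Λ → Fin N} {E E' : ℝ}
    {u u' : (Fin d → ℤ) → ℝ} (hu : IsQuasimode Λ γ (potential N Λ ω) E s κ b u)
    (hu' : IsQuasimode Λ γ (potential N Λ ω') E' s κ b u') (hamp : HasAmplitudes η u 0 l)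
    (hamp' : HasAmplitudes η u' 0 l) (hnd : l.Nodup) (hl : ∀ y ∈ l, y ∈ ball Λ b (3 * s))
    (hagree : ∀ i : Λ, ↑i ∉ l → ω i = ω' i) (hγ : 0 < γ) (hκ : 0 ≤ κ) (hη0 : 0 < η)
    (hη : 4 * η ^ 2 ≤ 1 / N) (hE : |E - E'| ≤ 2 * ε)
    (hsmall : (2 * ε + 2 * κ * γ * 3 ^ d) * (6 * s + 1) ^ d < 1 / N / 2 * η ^ (4 * l.length)) :
    ω = ω' := by
  by_contra hne
  obtain ⟨i, hi⟩ := Function.ne_iff.1 hne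
  set f : (Fin d → ℤ) → ℝ := fun w => potential N Λ ω w - potential N Λ ω' w
  have hoff : ∀ w, w ∉ l → f w = 0 := fun w hw =>
    sub_eq_zero.2 (potential_congr fun hwΛ => hagree ⟨w, hwΛ⟩ hw)
  have hgap (w : Fin d → ℤ) : f w = 0 ∨ 1 / (N : ℝ) ≤ |f w| := by
    by_cases hw : ∀ h : w ∈ Λ, ω ⟨w, h⟩ = ω' ⟨w, h⟩
    · exact Or.inl (sub_eq_zero.2 (potential_congr hw))
    · obtain ⟨hwΛ, hw⟩ := not_forall.1 hw
      exact Or.inr (one_div_le_abs_potential_sub hwΛ hwΛ hw)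
  have hN : 1 / (N : ℝ) ≤ 1 := div_le_one_of_le₀ (mod_cast (ω i).pos) (Nat.cast_nonneg N)
  have hmem : ↑i ∈ l := not_imp_comm.1 (hagree i) hi
  have hfi : f i ≠ 0 := by
    have : 0 < 1 / (N : ℝ) := (by positivity : 0 < 4 * η ^ 2).trans_le hη
    exact abs_pos.1 (this.trans_le (one_div_le_abs_potential_sub i.2 i.2 hi))
  have hlower := hamp.le_abs_sum_mul hη0 hη hN
    (fun w _ => abs_potential_sub_le_one ω ω' w w) (fun w _ => hgap w) hamp' ⟨i, hmem, hfi⟩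
  have hsum : ∑ w ∈ ball Λ b (3 * s), f w * (u w * u' w) =
      (l.map fun w => f w * (u w * u' w)).sum := by
    rw [← List.sum_toFinset _ hnd]
    refine (Finset.sum_subset (fun y hy => hl y (List.mem_toFinset.1 hy)) fun w _ hw => ?_).symm
    rw [hoff w (mt List.mem_toFinset.2 hw), zero_mul]
  have hupper := hu.abs_sum_sub_mul_mul_le hu' hγ hκ
  rw [hsum] at hupper
  have : (|E - E'| + 2 * κ * γ * 3 ^ d) * (6 * s + 1) ^ d ≤
      (2 * ε + 2 * κ * γ * 3 ^ d) * (6 * s + 1) ^ d := by gcongr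
  rw [zero_add] at hlower
  linarith

variable [NeZero N]

lemma prob_isQuasimode_hasAmplitudes_le (hγ : 0 < γ) (hκ : 0 ≤ κ) (hη0 : 0 < η)
    (hη : 4 * η ^ 2 ≤ 1 / N)
    (hsmall : (2 * ε + 2 * κ * γ * 3 ^ d) * (6 * s + 1) ^ d < 1 / N / 2 * η ^ (4 * l.length))
    (hnd : l.Nodup) (hl : ∀ y ∈ l, y ∈ ball Λ b (3 * s)) :
    prob (fun ω : Λ → Fin N => ∃ E, |E - E₀| ≤ ε ∧
      ∃ u, IsQuasimode Λ γ (potential N Λ ω) E s κ b u ∧ HasAmplitudes η u 0 l)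
      ≤ 1 / (N : ℝ) ^ l.length := by
  classical
  set T : Finset Λ := l.toFinset.subtype (· ∈ Λ)
  have hT : T.card = l.length := by
    rw [Finset.card_subtype, Finset.filter_true_of_mem, List.toFinset_card_of_nodup hnd]
    exact fun y hy => (mem_ball.1 (hl y (List.mem_toFinset.1 hy))).1
  rw [← hT]
  refine (prob_le_one_div_card_pow T _ ?_).trans_eq (by rw [Fintype.card_fin])
  rintro ω ω' ⟨E, hE, u, hu, hamp⟩ ⟨E', hE', u', hu', hamp'⟩ hagree
  refine eq_of_isQuasimode_of_hasAmplitudes hu hu' hamp hamp' hnd hl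
    (fun i hi => hagree i (by simpa [T] using hi)) hγ hκ hη0 hη ?_ hsmall
  rw [abs_le] at hE hE' ⊢
  constructor <;> linarith

lemma card_biUnion_pathSublists_le (e : Fin d → ℤ) (Λ : Finset (Fin d → ℤ)) (b : Fin d → ℤ)
    (r n : ℕ) : ((ball Λ b r).biUnion (pathSublists e n)).card ≤
      (2 * r + 1) ^ d * (2 * 3 ^ d) ^ n :=
  (Finset.card_biUnion_le_card_mul _ _ _ fun z _ => card_pathSublists_le e n z).trans
    (Nat.mul_le_mul_right _ (card_ball_le Λ b r))

lemma prob_hasQuasimode_le {a c : Fin d → ℤ} {i₀ : Fin d} (hside : a i₀ + 6 * s ≤ c i₀)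
    (hγ : 0 < γ) (hγ3 : γ * 3 ^ d ≤ 1) (hκ : 0 ≤ κ) (hη0 : 0 < η) (hη : 4 * η ^ 2 ≤ 1 / N)
    (hηγ : η * (3 ^ d + 3) ≤ γ) (hκη : κ < η ^ (2 * m + 1))
    (hsmall : (2 * ε + 2 * κ * γ * 3 ^ d) * (6 * s + 1) ^ d < 1 / N / 2 * η ^ (4 * m)) :
    prob (fun ω : Finset.Icc a c → Fin N => ∃ E, |E - E₀| ≤ ε ∧
      HasQuasimode (Finset.Icc a c) γ (potential N (Finset.Icc a c) ω) E s κ b)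
      ≤ (4 * s + 1) ^ d * (2 * 3 ^ d) ^ (5 * s) * (1 / (N : ℝ) ^ m) := by
  obtain ⟨σ, hσ, hroom⟩ := exists_forall_add_single_mem_Icc hside b
  set Λ := Finset.Icc a c
  set I := (ball Λ b (2 * s)).biUnion (pathSublists (Pi.single i₀ σ) (5 * s))
  have hI : (I.card : ℝ) ≤ (4 * s + 1) ^ d * (2 * 3 ^ d) ^ (5 * s) := by
    have := card_biUnion_pathSublists_le (Pi.single i₀ σ) Λ b (2 * s) (5 * s)
    rw [show 2 * (2 * s) + 1 = 4 * s + 1 by ring] at this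
    exact_mod_cast this
  have hcover (ω : Λ → Fin N)
      (hω : ∃ E, |E - E₀| ≤ ε ∧ HasQuasimode Λ γ (potential N Λ ω) E s κ b) :
      ∃ l ∈ I, (l.length = m ∧ l.Nodup ∧ ∀ y ∈ l, y ∈ ball Λ b (3 * s)) ∧ ∃ E, |E - E₀| ≤ ε ∧
        ∃ u, IsQuasimode Λ γ (potential N Λ ω) E s κ b u ∧ HasAmplitudes η u 0 l := by
    obtain ⟨E, hE, u, hu, z, hz, hz1⟩ := hω
    obtain ⟨l, hl, hlen, hnd, hamp, hlb⟩ := hu.exists_hasAmplitudes hσ hroom hγ hγ3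
      (abs_potential_sub_le_one ω ω) hη0 hηγ hκη hz hz1
    exact ⟨l, Finset.mem_biUnion.2 ⟨z, hz, hl⟩, ⟨hlen, hnd, hlb⟩, E, hE, u, hu, hamp⟩
  refine (prob_mono hcover).trans (prob_exists_le_mul I _ (by positivity) hI fun l _ =>
    prob_const_and_le (by positivity) ?_)
  rintro ⟨rfl, hnd, hlb⟩
  exact prob_isQuasimode_hasAmplitudes_le hγ hκ hη0 hη hsmall hnd hlb

end Wegner

/-! ### Quasimodes are close to eigenvalues -/

section ApproximateEigenvector

variable {𝕜 n : Type*} [RCLike 𝕜] [Fintype n] [DecidableEq n] {M : Matrix n n 𝕜}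

lemma inner_eigenvectorBasis_sub_smul (hM : M.IsHermitian) (E : ℝ) (u : EuclideanSpace 𝕜 n)
    (i : n) :
    inner 𝕜 (hM.eigenvectorBasis i) (M.toEuclideanLin u - (E : 𝕜) • u) =
      (hM.eigenvalues i - E : 𝕜) * inner 𝕜 (hM.eigenvectorBasis i) u := by
  have heig : M.toEuclideanLin (hM.eigenvectorBasis i) =
      (hM.eigenvalues i : 𝕜) • hM.eigenvectorBasis i := by
    ext w
    simpa [Matrix.toLpLin_apply] using congrFun (hM.mulVec_eigenvectorBasis i) w
  rw [inner_sub_right, ← Matrix.isSymmetric_toEuclideanLin_iff.2 hM, heig, inner_smul_left,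
    inner_smul_right, RCLike.conj_ofReal, sub_mul]

lemma exists_abs_eigenvalue_sub_mul_norm_le [Nonempty n] (hM : M.IsHermitian) (E : ℝ)
    (u : EuclideanSpace 𝕜 n) :
    ∃ i, |hM.eigenvalues i - E| * ‖u‖ ≤ ‖M.toEuclideanLin u - (E : 𝕜) • u‖ := by
  obtain ⟨i, hi⟩ := Finite.exists_min fun i => |hM.eigenvalues i - E|
  refine ⟨i, (pow_le_pow_iff_left₀ (by positivity) (norm_nonneg _) two_ne_zero).1 ?_⟩
  rw [mul_pow, ← hM.eigenvectorBasis.sum_sq_norm_inner_right u,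
    ← hM.eigenvectorBasis.sum_sq_norm_inner_right, Finset.mul_sum]
  refine Finset.sum_le_sum fun j _ => ?_
  rw [inner_eigenvectorBasis_sub_smul, norm_mul, mul_pow, ← RCLike.ofReal_sub, RCLike.norm_ofReal]
  exact mul_le_mul_of_nonneg_right (pow_le_pow_left₀ (abs_nonneg _) (hi j) 2) (sq_nonneg _)

lemma exists_abs_eigenvalue_sub_le {M : Matrix n n ℝ} (hM : M.IsHermitian) {E r : ℝ} {u : n → ℝ}
    {z : n} (hz : |u z| = 1) (hr : ∀ w, |M.mulVec u w - E * u w| ≤ r) :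
    ∃ i, |hM.eigenvalues i - E| ≤ r * Fintype.card n := by
  have : Nonempty n := ⟨z⟩
  have hr0 : 0 ≤ r := (abs_nonneg _).trans (hr z)
  obtain ⟨i, hi⟩ := exists_abs_eigenvalue_sub_mul_norm_le hM E (WithLp.toLp 2 u)
  set W := M.toEuclideanLin (WithLp.toLp 2 u) - (E : ℝ) • WithLp.toLp 2 u
  have hu : 1 ≤ ‖WithLp.toLp 2 u‖ := hz ▸ PiLp.norm_apply_le (WithLp.toLp 2 u) z
  have hcard : (1 : ℝ) ≤ Fintype.card n := mod_cast Fintype.card_pos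
  have hW : ‖W‖ ≤ r * Fintype.card n := by
    refine (pow_le_pow_iff_left₀ (norm_nonneg _) (by positivity) two_ne_zero).1 ?_
    calc ‖W‖ ^ 2 = ∑ w, ‖W w‖ ^ 2 := EuclideanSpace.norm_sq_eq _
      _ ≤ ∑ _w : n, r ^ 2 := by
        gcongr with w
        exact hr w
      _ = r ^ 2 * Fintype.card n := by simp [mul_comm]
      _ ≤ (r * Fintype.card n) ^ 2 := by
        rw [mul_pow]
        gcongr
        exact le_self_pow₀ hcard two_ne_zero
  exact ⟨i, (le_mul_of_one_le_right (abs_nonneg _) hu).trans (hi.trans hW)⟩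

end ApproximateEigenvector

section Spectrum

variable {Λ S : Finset (Fin d → ℤ)} {γ E κ : ℝ} {v v' u : (Fin d → ℤ) → ℝ} {s : ℕ} {b : Fin d → ℤ}

lemma hamOn_mulVec (γ : ℝ) (v : (Fin d → ℤ) → ℝ) (X : Finset (Fin d → ℤ))
    (u : (Fin d → ℤ) → ℝ) (w : X) :
    (hamOn d γ v X).mulVec (fun y => u y) w =
      (2 * d * γ + v w) * u w - γ * ∑ y ∈ neighbors X w, u y := by
  change ∑ y : X, hamEntry d γ v w y * u y = _
  rw [Finset.sum_coe_sort X (fun y => hamEntry d γ v w y * u y)]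
  simp only [hamEntry, sub_mul, Finset.sum_sub_distrib]
  congr 1
  · simp [ite_mul]
  · simp [neighbors, Finset.sum_filter, Finset.mul_sum]

lemma solvesAt_iff_hamOn_mulVec {w : Λ} :
    SolvesAt Λ γ v E u w ↔ (hamOn d γ v Λ).mulVec (fun y => u y) w = E * u w := by
  rw [SolvesAt, hamOn_mulVec, sub_mul, sub_eq_iff_eq_add, sub_eq_iff_eq_add']

/-- The set of eigenvalues of the Anderson Hamiltonian on `S`. -/
def spectrumOn (d : ℕ) (γ : ℝ) (v : (Fin d → ℤ) → ℝ) (S : Finset (Fin d → ℤ)) : Finset ℝ :=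
  Finset.univ.image (hamOn_isHermitian d γ v S).eigenvalues

lemma card_spectrumOn_le (γ : ℝ) (v : (Fin d → ℤ) → ℝ) (S : Finset (Fin d → ℤ)) :
    (spectrumOn d γ v S).card ≤ S.card :=
  Finset.card_image_le.trans_eq (by simp)

lemma hamOn_congr (h : ∀ w ∈ S, v w = v' w) : hamOn d γ v S = hamOn d γ v' S := by
  ext x y
  simp only [hamOn, Matrix.of_apply, hamEntry, h x x.2]

lemma spectrumOn_congr (h : ∀ w ∈ S, v w = v' w) : spectrumOn d γ v S = spectrumOn d γ v' S := by
  have (M : Matrix S S ℝ) (hM : M.IsHermitian) (h : hamOn d γ v S = M) :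
      spectrumOn d γ v S = Finset.univ.image hM.eigenvalues := by
    subst h
    rfl
  exact this _ _ (hamOn_congr h)

lemma SolvesAt.hamOn_mulVec_sub {w : S} (hS : S ⊆ Λ) (h : SolvesAt Λ γ v E u w) :
    (hamOn d γ v S).mulVec (fun y => u y) w - E * u w =
      γ * ∑ y ∈ neighbors Λ w with y ∉ S, u y := by
  have hsplit : {y ∈ neighbors Λ w | y ∈ S} = neighbors S w := by
    ext y
    simp only [neighbors, Finset.mem_filter]
    exact ⟨fun h => ⟨h.2, h.1.2⟩, fun h => ⟨⟨hS h.1, h.2⟩, h.1⟩⟩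
  rw [SolvesAt, ← Finset.sum_filter_add_sum_filter_not (neighbors Λ w) (· ∈ S), hsplit] at h
  rw [hamOn_mulVec]
  linear_combination h

lemma HasQuasimode.exists_mem_spectrumOn (h : HasQuasimode Λ γ v E s κ b) (hγ : 0 < γ)
    (hκ : 0 ≤ κ) :
    ∃ μ ∈ spectrumOn d γ v (ball Λ b (3 * s)), |E - μ| ≤ γ * 3 ^ d * κ * (6 * s + 1) ^ d := by
  obtain ⟨u, hu, z, hz, hz1⟩ := h
  set S := ball Λ b (3 * s)
  have hres (w : S) : |(hamOn d γ v S).mulVec (fun y => u y) w - E * u w| ≤ γ * 3 ^ d * κ := by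
    rw [(hu.solvesAt w w.2).hamOn_mulVec_sub (ball_subset Λ b _), abs_mul, abs_of_pos hγ, mul_assoc]
    gcongr
    exact abs_sum_le_of_subset_neighbors (Finset.filter_subset _ _) hκ fun y hy =>
      hu.abs_le_of_mem_neighbors w.2 (Finset.mem_filter.1 hy).1 (Finset.mem_filter.1 hy).2
  obtain ⟨i, hi⟩ := exists_abs_eigenvalue_sub_le (hamOn_isHermitian d γ v S)
    (z := ⟨z, ball_subset_ball (by simp [supDist_self]; omega) hz⟩) hz1 hres
  refine ⟨_, Finset.mem_image_of_mem _ (Finset.mem_univ i), ?_⟩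
  rw [abs_sub_comm]
  refine hi.trans ?_
  gcongr
  rw [Fintype.card_coe]
  exact card_ball_three_mul_le Λ b s

end Spectrum

/-! ### The induction step of the multiscale analysis -/

section Events

variable {N : ℕ} {Λ : Finset (Fin d → ℤ)} {γ κ E₀ ε : ℝ} {s S n : ℕ}
  {x y : Fin d → ℤ}

/-- The sites of `Λ` at distance less than `s` from `x`; those on which `IsSingular … s κ x`
depends. -/
def sitesNear (Λ : Finset (Fin d → ℤ)) (x : Fin d → ℤ) (s : ℕ) : Set Λ :=
  {i | supDist x i < s}

lemma disjoint_sitesNear (h : 2 * s ≤ supDist x y) :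
    Disjoint (sitesNear Λ x s) (sitesNear Λ y s) := by
  refine Set.disjoint_left.2 fun i (hx : supDist x i < s) (hy : supDist y i < s) => ?_
  have := supDist_triangle x i y
  rw [supDist_comm i y] at this
  omega

lemma IsSingular.congr_potential {ω ω' : Λ → Fin N} {E : ℝ}
    (h : IsSingular Λ γ (potential N Λ ω) E s κ x) (hω : ∀ i ∈ sitesNear Λ x s, ω i = ω' i) :
    IsSingular Λ γ (potential N Λ ω') E s κ x :=
  h.congr fun w hw hxw => potential_congr fun _ => hω ⟨w, hw⟩ hxw

/-- The event that `x` is singular at some energy within `ε` of `E₀`. -/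
def IsSingularNear (Λ : Finset (Fin d → ℤ)) (γ E₀ ε : ℝ) (s : ℕ) (κ : ℝ) (x : Fin d → ℤ)
    (ω : Λ → Fin N) : Prop :=
  ∃ E, |E - E₀| ≤ ε ∧ IsSingular Λ γ (potential N Λ ω) E s κ x

/-- The event that `x` and `y` are singular at a common energy. -/
def AreJointlySingular (Λ : Finset (Fin d → ℤ)) (γ : ℝ) (s : ℕ) (κ : ℝ) (x y : Fin d → ℤ)
    (ω : Λ → Fin N) : Prop :=
  ∃ E, IsSingular Λ γ (potential N Λ ω) E s κ x ∧ IsSingular Λ γ (potential N Λ ω) E s κ y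

lemma dependsOn_isSingularNear :
    DependsOn (IsSingularNear (N := N) Λ γ E₀ ε s κ x) (sitesNear Λ x s) :=
  dependsOn_of_imp fun _ _ hω ⟨E, hE, h⟩ => ⟨E, hE, h.congr_potential hω⟩

lemma dependsOn_areJointlySingular :
    DependsOn (AreJointlySingular (N := N) Λ γ s κ x y) (sitesNear Λ x s ∪ sitesNear Λ y s) :=
  dependsOn_of_imp fun _ _ hω ⟨E, hx, hy⟩ =>
    ⟨E, hx.congr_potential fun i hi => hω i (Or.inl hi),
      hy.congr_potential fun i hi => hω i (Or.inr hi)⟩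

lemma AreJointlySingular.exists_areJointlySingular_or_hasQuasimode {ω : Λ → Fin N}
    (h : AreJointlySingular Λ γ S (κ ^ n) x y ω) (hx : x ∈ Λ) (hy : y ∈ Λ) (hs : 1 ≤ s)
    (hκ : 0 < κ) (hκ1 : κ < 1) (hn : n * s + 12 * s ≤ S) :
    (∃ w ∈ (ball Λ x (S - s) ×ˢ ball Λ y (S - s)) ×ˢ (ball Λ x (S - s) ×ˢ ball Λ y (S - s)),
      (2 * s < supDist w.1.1 w.2.1 ∧ 2 * s < supDist w.1.2 w.2.2) ∧
      AreJointlySingular Λ γ s κ w.1.1 w.1.2 ω ∧ AreJointlySingular Λ γ s κ w.2.1 w.2.2 ω) ∨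
    (∃ b ∈ ball Λ x (S - 5 * s), ∃ E, HasQuasimode Λ γ (potential N Λ ω) E s κ b ∧
      IsSingular Λ γ (potential N Λ ω) E S (κ ^ n) y) ∨
    ∃ b ∈ ball Λ y (S - 5 * s), ∃ E, HasQuasimode Λ γ (potential N Λ ω) E s κ b ∧
      IsSingular Λ γ (potential N Λ ω) E S (κ ^ n) x := by
  obtain ⟨E, hsx, hsy⟩ := h
  have hmem {r : ℕ} {x w : Fin d → ℤ} (hw : w ∈ Λ) (hxw : supDist x w + r ≤ S) :
      w ∈ ball Λ x (S - r) := mem_ball.2 ⟨hw, by omega⟩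
  rcases hsx.exists_isSingular_or_hasQuasimode hx hs hκ hκ1 hn with
    ⟨w, hw, w', hw', hxw, hxw', hww', hsw, hsw'⟩ | ⟨b, hb, hxb, hmode⟩
  · rcases hsy.exists_isSingular_or_hasQuasimode hy hs hκ hκ1 hn with
      ⟨z, hz, z', hz', hyz, hyz', hzz', hsz, hsz'⟩ | ⟨b, hb, hyb, hmode⟩
    · refine Or.inl ⟨((w, z), (w', z')), ?_, ⟨hww', hzz'⟩, ⟨E, hsw, hsz⟩, E, hsw', hsz'⟩
      simp only [Finset.mem_product]
      exact ⟨⟨hmem hw hxw, hmem hz hyz⟩, hmem hw' hxw', hmem hz' hyz'⟩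
    · exact Or.inr (Or.inr ⟨b, hmem hb hyb, E, hmode, hsx⟩)
  · exact Or.inr (Or.inl ⟨b, hmem hb hxb, E, hmode, hsy⟩)

end Events

section Step

variable {N : ℕ} [NeZero N] {Λ : Finset (Fin d → ℤ)} {γ κ K E₀ ε ε' p q : ℝ} {s S n r : ℕ}
  {x y b w z : Fin d → ℤ}

lemma card_ball_le_of_le (Λ : Finset (Fin d → ℤ)) (x : Fin d → ℤ) (hr : r ≤ S) :
    ((ball Λ x r).card : ℝ) ≤ (2 * S + 1) ^ d := by
  refine (Nat.cast_le.2 (card_ball_le Λ x r)).trans ?_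
  push_cast
  gcongr

lemma prob_isSingularNear_le (hx : x ∈ Λ) (hs : 1 ≤ s) (hκ : 0 < κ) (hκ1 : κ < 1)
    (hn : n * s + 12 * s ≤ S) (hε : ε' ≤ ε) (hq : 0 ≤ q)
    (hP : ∀ w ∈ Λ, prob (IsSingularNear (N := N) Λ γ E₀ ε s κ w) ≤ p)
    (hW : ∀ b, prob (fun ω : Λ → Fin N =>
      ∃ E, |E - E₀| ≤ ε' ∧ HasQuasimode Λ γ (potential N Λ ω) E s κ b) ≤ q) :
    prob (IsSingularNear (N := N) Λ γ E₀ ε' S (κ ^ n) x)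
      ≤ (2 * S + 1) ^ (2 * d) * p ^ 2 + (2 * S + 1) ^ d * q := by
  set A := IsSingularNear (N := N) Λ γ E₀ ε s κ
  have hcover (ω : Λ → Fin N) (hω : IsSingularNear Λ γ E₀ ε' S (κ ^ n) x ω) :
      (∃ w ∈ ball Λ x S ×ˢ ball Λ x S, 2 * s < supDist w.1 w.2 ∧ A w.1 ω ∧ A w.2 ω) ∨
      ∃ b ∈ ball Λ x S, ∃ E, |E - E₀| ≤ ε' ∧ HasQuasimode Λ γ (potential N Λ ω) E s κ b := by
    have hmem {r : ℕ} {w : Fin d → ℤ} (hw : w ∈ Λ) (hxw : supDist x w + r ≤ S) : w ∈ ball Λ x S :=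
      mem_ball.2 ⟨hw, by omega⟩
    obtain ⟨E, hE, hsing⟩ := hω
    rcases hsing.exists_isSingular_or_hasQuasimode hx hs hκ hκ1 hn with
      ⟨w, hw, w', hw', hxw, hxw', hww', hsw, hsw'⟩ | ⟨b, hb, hxb, hmode⟩
    · exact Or.inl ⟨(w, w'), Finset.mem_product.2 ⟨hmem hw hxw, hmem hw' hxw'⟩, hww',
        ⟨E, hE.trans hε, hsw⟩, E, hE.trans hε, hsw'⟩
    · exact Or.inr ⟨b, hmem hb hxb, E, hE, hmode⟩
  have hcard := card_ball_le_of_le Λ x (le_refl S)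
  refine (prob_mono hcover).trans ((prob_or_le _ _).trans (add_le_add ?_ ?_))
  · refine prob_exists_le_mul _ _ (by positivity) ?_ fun ⟨w, w'⟩ hw =>
      prob_const_and_le (by positivity) fun hsep => ?_
    · rw [Finset.card_product, Nat.cast_mul, two_mul d, pow_add]
      gcongr
    · obtain ⟨hw, hw'⟩ := Finset.mem_product.1 hw
      have hpw := hP w (ball_subset Λ x S hw)
      rw [prob_and_eq_mul dependsOn_isSingularNear dependsOn_isSingularNear
        (disjoint_sitesNear hsep.le), sq]
      exact mul_le_mul hpw (hP w' (ball_subset Λ x S hw')) (prob_nonneg _)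
        ((prob_nonneg _).trans hpw)
  · exact prob_exists_le_mul _ _ hq hcard fun b _ => hW b

-- Given the potential near `x`, a quasimode pins the energy to one of the finitely many
-- eigenvalues of its box, and the potential near `y` is still independent of them.
lemma prob_hasQuasimode_and_isSingular_le (hγ : 0 < γ) (hs : 1 ≤ s) (hκ : 0 ≤ κ)
    (hε : γ * 3 ^ d * κ * (6 * s + 1) ^ d ≤ ε) (hp : 0 ≤ p)
    (hP : ∀ E₀, prob (IsSingularNear (N := N) Λ γ E₀ ε S K y) ≤ p) (hxy : 2 * S < supDist x y)
    (hb : supDist x b + 5 * s ≤ S) :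
    prob (fun ω : Λ → Fin N => ∃ E, HasQuasimode Λ γ (potential N Λ ω) E s κ b ∧
      IsSingular Λ γ (potential N Λ ω) E S K y) ≤ (6 * s + 1) ^ d * p := by
  classical
  refine prob_le_of_forall_piecewise (sitesNear Λ x S) _ fun ω => ?_
  set I := spectrumOn d γ (potential N Λ ω) (ball Λ b (3 * s))
  have hI : (I.card : ℝ) ≤ (6 * s + 1) ^ d :=
    (Nat.cast_le.2 (card_spectrumOn_le _ _ _)).trans (card_ball_three_mul_le Λ b s)
  refine (prob_mono fun ω' hω' => ?_).trans
    (prob_exists_le_mul I (fun μ => IsSingularNear (N := N) Λ γ μ ε S K y) hp hI fun μ _ => hP μ)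
  obtain ⟨E, hmode, hsing⟩ := hω'
  obtain ⟨μ, hμ, hE⟩ := hmode.exists_mem_spectrumOn hγ hκ
  refine ⟨μ, ?_, E, hE.trans hε, hsing.congr_potential fun i hi => ?_⟩
  · rwa [spectrumOn_congr fun w hw => potential_congr fun hwΛ => Set.piecewise_eq_of_mem _ _ _ ?_]
      at hμ
    have hbw := (mem_ball.1 hw).2
    have hxw := supDist_triangle x b w
    exact show supDist x w < S by omega
  · exact Set.piecewise_eq_of_notMem _ _ _
      ((disjoint_sitesNear hxy.le).notMem_of_mem_right hi)

lemma two_mul_lt_supDist (hs : s ≤ S) (hxy : 2 * S < supDist x y) (hw : w ∈ ball Λ x (S - s))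
    (hz : z ∈ ball Λ y (S - s)) : 2 * s < supDist w z := by
  have hxw := (mem_ball.1 hw).2
  have hyz := (mem_ball.1 hz).2
  have hxz := supDist_triangle x z y
  have hxwz := supDist_triangle x w z
  rw [supDist_comm z y] at hxz
  omega

lemma prob_areJointlySingular_and_le
    (hQ : ∀ w ∈ Λ, ∀ z ∈ Λ, 2 * s < supDist w z →
      prob (AreJointlySingular (N := N) Λ γ s κ w z) ≤ q)
    (hs : s ≤ S) (hxy : 2 * S < supDist x y) {w' z' : Fin d → ℤ}
    (hw : w ∈ ball Λ x (S - s)) (hw' : w' ∈ ball Λ x (S - s)) (hz : z ∈ ball Λ y (S - s))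
    (hz' : z' ∈ ball Λ y (S - s)) (hww' : 2 * s < supDist w w') (hzz' : 2 * s < supDist z z') :
    prob (fun ω : Λ → Fin N => AreJointlySingular Λ γ s κ w z ω ∧
      AreJointlySingular Λ γ s κ w' z' ω) ≤ q ^ 2 := by
  have hwz := hQ w (ball_subset _ _ _ hw) z (ball_subset _ _ _ hz) (two_mul_lt_supDist hs hxy hw hz)
  have hwz' := hQ w' (ball_subset _ _ _ hw') z' (ball_subset _ _ _ hz')
    (two_mul_lt_supDist hs hxy hw' hz')
  have hdisj : Disjoint (sitesNear Λ w s ∪ sitesNear Λ z s)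
      (sitesNear Λ w' s ∪ sitesNear Λ z' s) := by
    simp only [Set.disjoint_union_left, Set.disjoint_union_right]
    exact ⟨⟨disjoint_sitesNear hww'.le,
      (disjoint_sitesNear (two_mul_lt_supDist hs hxy hw' hz).le).symm⟩,
      disjoint_sitesNear (two_mul_lt_supDist hs hxy hw hz').le, disjoint_sitesNear hzz'.le⟩
  rw [prob_and_eq_mul dependsOn_areJointlySingular dependsOn_areJointlySingular hdisj, sq]
  exact mul_le_mul hwz hwz' (prob_nonneg _) ((prob_nonneg _).trans hwz)

lemma prob_areJointlySingular_le (hγ : 0 < γ) (hs : 1 ≤ s) (hκ : 0 < κ) (hκ1 : κ < 1)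
    (hn : n * s + 12 * s ≤ S) (hε : γ * 3 ^ d * κ * (6 * s + 1) ^ d ≤ ε) (hp : 0 ≤ p)
    (hP : ∀ E₀, ∀ w ∈ Λ, prob (IsSingularNear (N := N) Λ γ E₀ ε S (κ ^ n) w) ≤ p)
    (hQ : ∀ w ∈ Λ, ∀ z ∈ Λ, 2 * s < supDist w z →
      prob (AreJointlySingular (N := N) Λ γ s κ w z) ≤ q)
    (hx : x ∈ Λ) (hy : y ∈ Λ) (hxy : 2 * S < supDist x y) :
    prob (AreJointlySingular (N := N) Λ γ S (κ ^ n) x y)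
      ≤ (2 * S + 1) ^ (4 * d) * q ^ 2 + 2 * ((2 * S + 1) ^ d * ((6 * s + 1) ^ d * p)) := by
  have hmode {x y : Fin d → ℤ} (hy : y ∈ Λ) (hxy : 2 * S < supDist x y) :
      prob (fun ω : Λ → Fin N => ∃ b ∈ ball Λ x (S - 5 * s), ∃ E,
        HasQuasimode Λ γ (potential N Λ ω) E s κ b ∧ IsSingular Λ γ (potential N Λ ω) E S (κ ^ n) y)
        ≤ (2 * S + 1) ^ d * ((6 * s + 1) ^ d * p) :=
    prob_exists_le_mul _ _ (by positivity) (card_ball_le_of_le Λ x (Nat.sub_le _ _)) fun b hb =>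
      prob_hasQuasimode_and_isSingular_le hγ hs hκ.le hε hp (fun E₀ => hP E₀ y hy) hxy
        (by have := (mem_ball.1 hb).2
            omega)
  rw [two_mul ((2 * (S : ℝ) + 1) ^ d * _)]
  refine (prob_mono fun ω hω =>
    hω.exists_areJointlySingular_or_hasQuasimode hx hy hs hκ hκ1 hn).trans ((prob_or_le _ _).trans
    (add_le_add ?_ ((prob_or_le _ _).trans
      (add_le_add (hmode hy hxy) (hmode hx (supDist_comm x y ▸ hxy))))))
  refine prob_exists_le_mul _ _ (by positivity) ?_ fun w hw =>
    prob_const_and_le (by positivity) fun hsep => ?_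
  · rw [Finset.card_product, Finset.card_product, mul_comm 4 d, pow_mul]
    push_cast
    calc _ ≤ ((2 * (S : ℝ) + 1) ^ d * (2 * S + 1) ^ d) * ((2 * S + 1) ^ d * (2 * S + 1) ^ d) := by
          gcongr <;> exact card_ball_le_of_le Λ _ (Nat.sub_le _ _)
      _ = _ := by ring
  · simp only [Finset.mem_product] at hw
    exact prob_areJointlySingular_and_le hQ (by omega) hxy hw.1.1 hw.2.1 hw.1.2 hw.2.2
      hsep.1 hsep.2

end Step

/-! ### Length scales and parameters -/

/-- The length scales `s_k` of the multiscale analysis. The ratio `s_{k+1} / s_k` doubles at each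
step, so that the sizes of the defects left by the induction form a convergent series. -/
def scale (d : ℕ) : ℕ → ℕ
  | 0 => 4096 * d
  | k + 1 => 64 * 2 ^ k * scale d k

/-- The number of disjoint shells of width `s_k` used to iterate the regularity estimate from scale
`s_k` to `s_{k+1}`: the ratio `s_{k+1} / s_k` less the room taken by a single defect. -/
def scaleSteps (k : ℕ) : ℕ := 64 * 2 ^ k - 16

/-- The exponents `e_k` for which regularity at scale `s_k` means decay by `(g ^ e_k) ^ 2`. -/
def decayExp (d : ℕ) : ℕ → ℕ
  | 0 => 16 * scale d 0
  | k + 1 => decayExp d k * scaleSteps k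

lemma scale_succ (d k : ℕ) : scale d (k + 1) = 64 * 2 ^ k * scale d k := rfl

lemma mul_scale_le_scale_succ (d k : ℕ) : 64 * scale d k ≤ scale d (k + 1) := by
  rw [scale_succ]
  exact Nat.mul_le_mul_right _ (Nat.le_mul_of_pos_right _ (by positivity))

lemma mul_le_scale (d k : ℕ) : 4096 * d ≤ scale d k := by
  induction k with
  | zero => exact le_rfl
  | succ k ih => have := mul_scale_le_scale_succ d k; omega

lemma dvd_scale (d k : ℕ) : 128 ∣ scale d k := by
  induction k with
  | zero => exact (by norm_num : 128 ∣ 4096).mul_right d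
  | succ k ih => exact ih.mul_left _

lemma ratio_sq_le_scale (hd : 1 ≤ d) (k : ℕ) : (64 * 2 ^ k) ^ 2 ≤ scale d k := by
  induction k with
  | zero => rw [scale]; omega
  | succ k ih =>
    calc (64 * 2 ^ (k + 1)) ^ 2 = 4 * (64 * 2 ^ k) ^ 2 := by ring
      _ ≤ 64 * scale d k := Nat.mul_le_mul (by norm_num) ih
      _ ≤ scale d (k + 1) := mul_scale_le_scale_succ d k

lemma scale_succ_sq_le (hd : 1 ≤ d) (k : ℕ) : scale d (k + 1) ^ 2 ≤ scale d k ^ 3 := by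
  rw [scale_succ, mul_pow, pow_succ' _ 2]
  exact Nat.mul_le_mul_right _ (ratio_sq_le_scale hd k)

lemma scale_succ_le_sq (hd : 1 ≤ d) (k : ℕ) : scale d (k + 1) ≤ scale d k ^ 2 := by
  rw [scale_succ, sq]
  exact Nat.mul_le_mul_right _ ((Nat.le_self_pow two_ne_zero _).trans (ratio_sq_le_scale hd k))

lemma scaleSteps_mul_add_le (d k : ℕ) :
    scaleSteps k * scale d k + 12 * scale d k ≤ scale d (k + 1) := by
  rw [scale_succ, ← add_mul]
  refine Nat.mul_le_mul_right _ ?_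
  have := Nat.one_le_two_pow (n := k)
  unfold scaleSteps
  omega

lemma mul_scale_le_decayExp_mul (d k : ℕ) :
    8 * scale d k * (2 ^ k + 1) ≤ decayExp d k * 2 ^ k := by
  induction k with
  | zero => rw [decayExp]; omega
  | succ k ih =>
    have hsteps : 64 * 2 ^ k * (2 * 2 ^ k + 1) ≤ 2 * scaleSteps k * (2 ^ k + 1) := by
      have ht := Nat.one_le_two_pow (n := k)
      unfold scaleSteps
      zify [show 16 ≤ 64 * 2 ^ k by omega] at ht ⊢
      nlinarith
    calc 8 * scale d (k + 1) * (2 ^ (k + 1) + 1)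
        = 8 * scale d k * (64 * 2 ^ k * (2 * 2 ^ k + 1)) := by rw [scale_succ]; ring
      _ ≤ 8 * scale d k * (2 * scaleSteps k * (2 ^ k + 1)) := Nat.mul_le_mul_left _ hsteps
      _ = 2 * scaleSteps k * (8 * scale d k * (2 ^ k + 1)) := by ring
      _ ≤ 2 * scaleSteps k * (decayExp d k * 2 ^ k) := Nat.mul_le_mul_left _ ih
      _ = decayExp d (k + 1) * 2 ^ (k + 1) := by rw [decayExp]; ring

lemma mul_scale_le_decayExp (d k : ℕ) : 8 * scale d k ≤ decayExp d k := by
  refine Nat.le_of_mul_le_mul_right ?_ (Nat.two_pow_pos k)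
  exact (Nat.mul_le_mul_left _ (Nat.le_succ _)).trans (mul_scale_le_decayExp_mul d k)

/-- The factor `κ_k`, the decay of quasimodes at scale `s_k`. -/
def decay (d : ℕ) (g : ℝ) (k : ℕ) : ℝ := g ^ decayExp d k

lemma decay_succ (d : ℕ) (g : ℝ) (k : ℕ) : decay d g (k + 1) = decay d g k ^ scaleSteps k := by
  rw [decay, decay, decayExp, pow_mul]

/-- The half-width of the energy window in which sites singular at scale `s_k` are unlikely. -/
def energyWindow (d N : ℕ) (g : ℝ) : ℕ → ℝ
  | 0 => 1 / (8 * N)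
  | k + 1 => g ^ (6 * scale d k)

/-- The number whose `128`-th power is a disorder `N` sufficient to absorb the combinatorial factors
in the Wegner estimate into a probability `s_k ^ (-P)`, at all scales. -/
def wegnerConst (d P : ℕ) : ℕ := 2 * 15 ^ d * 2 ^ (3 * d + 2 * P) * (2 * 3 ^ d) ^ 5

/-- The exponent for which a site is singular at scale `s_k` near a given energy with probability at
most `s_k ^ (-P)`, when two sites are jointly singular with probability at most `s_k ^ (-q)`. -/
def siteExp (d q : ℕ) : ℕ := q + 3 * d + 1

/-- The parameters of the multiscale analysis: the hopping is `γ = g ^ 64`, the potential takes `N`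
values, and `q` is the power law of the probability that two distant sites are jointly singular. -/
structure Params (d N q : ℕ) (g : ℝ) : Prop where
  one_le_dim : 1 ≤ d
  two_le : 2 ≤ N
  pos : 0 < g
  mul_le_one : g * (64 * N * d * 21 ^ d) ≤ 1
  le_exp : 24 * d + 1 ≤ q
  scale_zero_le : (2 * scale d 0 + 1) ^ (2 * d) * scale d 0 ^ siteExp d q ≤ N
  wegnerConst_le : wegnerConst d (siteExp d q) ^ 128 ≤ N

namespace Params

variable {N q : ℕ} {g : ℝ}

lemma le_scale (h : Params d N q g) (k : ℕ) : 4096 ≤ scale d k :=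
  (Nat.le_mul_of_pos_right _ h.one_le_dim).trans (mul_le_scale d k)

lemma two_le_cast (h : Params d N q g) : (2 : ℝ) ≤ N := mod_cast h.two_le

lemma neZero (h : Params d N q g) : NeZero N := ⟨by have := h.two_le; omega⟩

lemma mul_le_one_of_le (h : Params d N q g) {B : ℝ} (hB : B ≤ 64 * N * d * 21 ^ d) :
    g * B ≤ 1 :=
  (mul_le_mul_of_nonneg_left hB h.pos.le).trans h.mul_le_one

lemma mul_card_mul_dim_le_one (h : Params d N q g) : g * (64 * N * d) ≤ 1 :=
  h.mul_le_one_of_le (le_mul_of_one_le_right (by positivity) (one_le_pow₀ (by norm_num)))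

lemma mul_card_mul_pow_le_one (h : Params d N q g) : g * (64 * N * 3 ^ d) ≤ 1 := by
  have hd : (1 : ℝ) ≤ d := mod_cast h.one_le_dim
  refine h.mul_le_one_of_le ?_
  calc (64 * N * 3 ^ d : ℝ) = 64 * N * 1 * 3 ^ d := by ring
    _ ≤ 64 * N * d * 21 ^ d := by gcongr; norm_num

lemma mul_card_le_one (h : Params d N q g) : g * (64 * N) ≤ 1 := by
  have := h.pos
  refine (mul_le_mul_of_nonneg_left ?_ h.pos.le).trans h.mul_card_mul_pow_le_one
  exact le_mul_of_one_le_right (by positivity) (one_le_pow₀ (by norm_num))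

lemma mul_seven_pow_le_one (h : Params d N q g) : g * 7 ^ d ≤ 1 := by
  have hd : (1 : ℝ) ≤ d := mod_cast h.one_le_dim
  have hN := h.two_le_cast
  refine h.mul_le_one_of_le ?_
  calc (7 ^ d : ℝ) = 1 * 1 * 1 * 7 ^ d := by ring
    _ ≤ 64 * N * d * 21 ^ d := by gcongr <;> linarith

lemma lt_one (h : Params d N q g) : g < 1 := by
  nlinarith [h.mul_card_le_one, h.two_le_cast, h.pos]

lemma pow_le_pow (h : Params d N q g) {m n : ℕ} (hmn : m ≤ n) : g ^ n ≤ g ^ m :=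
  pow_le_pow_of_le_one h.pos.le h.lt_one.le hmn

lemma pow_le_self (h : Params d N q g) {n : ℕ} (hn : 1 ≤ n) : g ^ n ≤ g := by
  simpa only [pow_one] using h.pow_le_pow hn

lemma pow_mul_three_pow_le (h : Params d N q g) : g ^ 64 * 3 ^ d ≤ 1 / 128 := by
  have hle : g ^ 64 * 3 ^ d ≤ g * 3 ^ d := by gcongr; exact h.pow_le_self (by norm_num)
  have hpos : 0 ≤ g * 3 ^ d := mul_nonneg h.pos.le (by positivity)
  nlinarith [h.mul_card_mul_pow_le_one, h.two_le_cast]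

lemma decay_pos (h : Params d N q g) (k : ℕ) : 0 < decay d g k := pow_pos h.pos _

lemma decay_le (h : Params d N q g) (k : ℕ) : decay d g k ≤ g ^ (8 * scale d k) :=
  h.pow_le_pow (mul_scale_le_decayExp d k)

lemma decay_lt_one (h : Params d N q g) (k : ℕ) : decay d g k < 1 :=
  (h.decay_le k).trans_lt (pow_lt_one₀ h.pos.le h.lt_one (by have := h.le_scale k; omega))

lemma volume_mul_pow_scale_le_one (h : Params d N q g) (k : ℕ) :
    (6 * (scale d k : ℝ) + 1) ^ d * g ^ scale d k ≤ 1 := by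
  have hg := h.pos
  have hlin : 1 + (scale d k : ℝ) * 6 ≤ (1 + 6) ^ scale d k :=
    one_add_mul_le_pow (by norm_num) _
  calc (6 * (scale d k : ℝ) + 1) ^ d * g ^ scale d k
      = (1 + (scale d k : ℝ) * 6) ^ d * g ^ scale d k := by ring
    _ ≤ ((1 + 6) ^ scale d k) ^ d * g ^ scale d k := by gcongr
    _ = (g * 7 ^ d) ^ scale d k := by rw [mul_pow, pow_right_comm]; norm_num [mul_comm]
    _ ≤ 1 := pow_le_one₀ (by positivity) h.mul_seven_pow_le_one

lemma energyWindow_succ_le (h : Params d N q g) (k : ℕ) :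
    energyWindow d N g (k + 1) ≤ energyWindow d N g k := by
  have hscale := h.le_scale 0
  cases k with
  | zero =>
    have hN := h.two_le_cast
    calc g ^ (6 * scale d 0) ≤ g := h.pow_le_self (by omega)
      _ ≤ 1 / (8 * N) := by
        rw [le_div_iff₀ (by positivity)]
        nlinarith [h.mul_card_le_one, h.pos]
  | succ k => exact h.pow_le_pow (by have := mul_scale_le_scale_succ d k; omega)

lemma decay_mul_volume_le_energyWindow (h : Params d N q g) (k : ℕ) :
    g ^ 64 * 3 ^ d * decay d g k * (6 * scale d k + 1) ^ d ≤ energyWindow d N g (k + 1) := by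
  have hg := h.pos
  have hhop : g ^ 64 * 3 ^ d ≤ 1 := h.pow_mul_three_pow_le.trans (by norm_num)
  calc g ^ 64 * 3 ^ d * decay d g k * (6 * scale d k + 1) ^ d
      ≤ 1 * g ^ (8 * scale d k) * (6 * scale d k + 1) ^ d := by
        have := (h.decay_pos k).le
        gcongr
        exact h.decay_le k
    _ = g ^ (7 * scale d k) * ((6 * scale d k + 1) ^ d * g ^ scale d k) := by ring
    _ ≤ g ^ (7 * scale d k) * 1 := by gcongr; exact h.volume_mul_pow_scale_le_one k
    _ ≤ g ^ (6 * scale d k) := by rw [mul_one]; exact h.pow_le_pow (by omega)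

lemma energyWindow_defect_lt (h : Params d N q g) (k : ℕ) :
    (2 * energyWindow d N g (k + 1) + 2 * decay d g k * g ^ 64 * 3 ^ d) *
      (6 * (scale d k : ℝ) + 1) ^ d < 1 / N / 2 * g ^ (4 * scale d k) := by
  have hg := h.pos
  have hN := h.two_le_cast
  have hscale := h.le_scale k
  have hdecay : decay d g k * (g ^ 64 * 3 ^ d) ≤ g ^ (6 * scale d k) * 1 :=
    mul_le_mul ((h.decay_le k).trans (h.pow_le_pow (by omega)))
      (h.pow_mul_three_pow_le.trans (by norm_num)) (by positivity) (by positivity)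
  have hpow : g ^ scale d k ≤ g := h.pow_le_self (by omega)
  have hsmall : 4 * g < 1 / N / 2 := by
    rw [div_div, lt_div_iff₀ (by positivity)]
    nlinarith [h.mul_card_le_one]
  calc (2 * g ^ (6 * scale d k) + 2 * decay d g k * g ^ 64 * 3 ^ d) *
        (6 * (scale d k : ℝ) + 1) ^ d
      ≤ 4 * g ^ (6 * scale d k) * (6 * (scale d k : ℝ) + 1) ^ d := by gcongr; linarith
    _ = 4 * g ^ scale d k * g ^ (4 * scale d k) *
        ((6 * (scale d k : ℝ) + 1) ^ d * g ^ scale d k) := by ring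
    _ ≤ 4 * g * g ^ (4 * scale d k) * 1 := by
        gcongr
        exact h.volume_mul_pow_scale_le_one k
    _ < 1 / N / 2 * g ^ (4 * scale d k) := by rw [mul_one]; gcongr

lemma prob_hasQuasimode_le (h : Params d N q g) (k : ℕ) {a c : Fin d → ℤ} {i₀ : Fin d}
    (hside : a i₀ + scale d (k + 1) ≤ c i₀) (E₀ : ℝ) (b : Fin d → ℤ) :
    prob (fun ω : Finset.Icc a c → Fin N => ∃ E, |E - E₀| ≤ energyWindow d N g (k + 1) ∧
        HasQuasimode (Finset.Icc a c) (g ^ 64) (potential N (Finset.Icc a c) ω) E (scale d k)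
          (decay d g k) b)
      ≤ (4 * scale d k + 1) ^ d * (2 * 3 ^ d) ^ (5 * scale d k) *
        (1 / (N : ℝ) ^ (scale d k / 128)) := by
  have hg := h.pos
  have hN := h.two_le_cast
  have hscale := h.le_scale k
  have hnext := mul_scale_le_scale_succ d k
  have hdvd : 128 * (scale d k / 128) = scale d k := Nat.mul_div_cancel' (dvd_scale d k)
  have := h.neZero
  have hhop := h.pow_mul_three_pow_le
  have hpow : g ^ 64 ≤ 1 / 128 := by
    refine le_trans (le_mul_of_one_le_right (by positivity) (one_le_pow₀ (by norm_num))) hhop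
  refine Anderson.prob_hasQuasimode_le (i₀ := i₀) (η := g ^ 128) (by omega) (by positivity)
    (by linarith) (h.decay_pos k).le (by positivity) ?_ ?_ ?_ ?_
  · calc 4 * (g ^ 128) ^ 2 = 4 * g ^ 256 := by ring
      _ ≤ 4 * g := by gcongr; exact h.pow_le_self (by norm_num)
      _ ≤ 1 / N := by
        rw [le_div_iff₀ (by positivity)]
        nlinarith [h.mul_card_le_one]
  · calc g ^ 128 * (3 ^ d + 3) = g ^ 64 * (g ^ 64 * 3 ^ d + 3 * g ^ 64) := by ring
      _ ≤ g ^ 64 * 1 := by gcongr; linarith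
      _ = g ^ 64 := mul_one _
  · rw [← pow_mul]
    exact (h.decay_le k).trans_lt (pow_lt_pow_right_of_lt_one₀ hg h.lt_one (by omega))
  · rw [← pow_mul, show 128 * (4 * (scale d k / 128)) = 4 * scale d k by omega]
    exact h.energyWindow_defect_lt k

end Params

/-! ### The initial scale -/

section Resonance

variable {N : ℕ} {Λ : Finset (Fin d → ℤ)} {w w' x : Fin d → ℤ}

lemma prob_abs_potential_sub_lt_le [NeZero N] (hw : w ∈ Λ) (E : ℝ) {θ : ℝ} (hθ : 2 * θ ≤ 1 / N) :
    prob (fun ω : Λ → Fin N => |potential N Λ ω w - E| < θ) ≤ 1 / N := by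
  have hfiber := prob_le_one_div_card_pow {⟨w, hw⟩}
    (fun ω : Λ → Fin N => |potential N Λ ω w - E| < θ) fun ω ω' hω hω' hagree => ?_
  · simpa using hfiber
  have heq : ω ⟨w, hw⟩ = ω' ⟨w, hw⟩ := by
    by_contra hne
    have hsub := one_div_le_abs_potential_sub hw hw hne
    have htri := abs_sub_le (potential N Λ ω w) E (potential N Λ ω' w)
    rw [abs_sub_comm E] at htri
    linarith
  funext i
  rcases eq_or_ne i ⟨w, hw⟩ with rfl | hi
  · exact heq
  · exact hagree i (by simpa using hi)

lemma prob_abs_potential_sub_potential_lt_le [NeZero N] (hw : w ∈ Λ) (hw' : w' ∈ Λ)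
    (hne : w ≠ w') :
    prob (fun ω : Λ → Fin N => |potential N Λ ω w - potential N Λ ω w'| < 1 / N) ≤ 1 / N := by
  have hfiber := prob_le_one_div_card_pow {⟨w, hw⟩}
    (fun ω : Λ → Fin N => |potential N Λ ω w - potential N Λ ω w'| < 1 / N)
    fun ω ω' hω hω' hagree => ?_
  · simpa using hfiber
  have heq {ω : Λ → Fin N} (hω : |potential N Λ ω w - potential N Λ ω w'| < 1 / N) :
      ω ⟨w, hw⟩ = ω ⟨w', hw'⟩ :=
    by_contra fun h => (one_div_le_abs_potential_sub hw hw' h).not_gt hω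
  funext i
  rcases eq_or_ne i ⟨w, hw⟩ with rfl | hi
  · rw [heq hω, heq hω', hagree _ (by simpa using hne.symm)]
  · exact hagree i (by simpa using hi)

lemma exists_abs_sub_lt_of_not_isRegular {γ E θ δ : ℝ} {v : (Fin d → ℤ) → ℝ} {s : ℕ} (hx : x ∈ Λ)
    (hγ : 0 < γ) (hθ : 0 < θ) (hγθ : 2 * d * γ ≤ θ / 2) (hδ : (2 * γ * 3 ^ d / θ) ^ s ≤ δ)
    (h : ¬ IsRegular Λ γ v E s δ x) : ∃ w ∈ Λ, supDist x w < s ∧ |v w - E| < θ := by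
  by_contra! hres
  exact h ((isRegular_of_nonresonant hx hγ hθ hγθ hres).mono hδ)

end Resonance

namespace Params

variable {N q s : ℕ} {g E δ : ℝ} {Λ : Finset (Fin d → ℤ)} {v : (Fin d → ℤ) → ℝ}
  {x y w w' : Fin d → ℤ}

lemma exists_resonant_of_not_isRegular (h : Params d N q g) (hx : x ∈ Λ)
    (hδ : (16 * N * 3 ^ d * g ^ 64) ^ s ≤ δ) (hx' : ¬ IsRegular Λ (g ^ 64) v E s δ x) :
    ∃ w ∈ Λ, supDist x w < s ∧ |v w - E| < 1 / (8 * N) := by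
  have hg := h.pos
  have hN := h.two_le_cast
  refine exists_abs_sub_lt_of_not_isRegular hx (by positivity) (by positivity) ?_ ?_ hx'
  · rw [div_div, le_div_iff₀ (by positivity)]
    calc 2 * d * g ^ 64 * (8 * N * 2) = g ^ 64 * (64 * N * d) / 2 := by ring
      _ ≤ g * (64 * N * d) / 2 := by gcongr; exact h.pow_le_self (by norm_num)
      _ ≤ 1 := by linarith [h.mul_card_mul_dim_le_one]
  · convert hδ using 2
    field_simp
    norm_num

lemma exists_resonant_of_isSingular (h : Params d N q g) (hx : x ∈ Λ)
    (hx' : IsSingular Λ (g ^ 64) v E (scale d 0) (decay d g 0) x) :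
    ∃ w ∈ ball Λ x (scale d 0), |v w - E| < 1 / (8 * N) := by
  have hg := h.pos
  have hpow : 16 * N * 3 ^ d * g ^ 64 ≤ g ^ 32 := by
    calc 16 * N * 3 ^ d * g ^ 64 = g ^ 32 * (g ^ 32 * (16 * N * 3 ^ d)) := by ring
      _ ≤ g ^ 32 * (g * (64 * N * 3 ^ d)) := by
        gcongr
        · exact h.pow_le_self (by norm_num)
        · norm_num
      _ ≤ g ^ 32 := mul_le_of_le_one_right (by positivity) h.mul_card_mul_pow_le_one
  obtain ⟨w, hw, hxw, hv⟩ := h.exists_resonant_of_not_isRegular hx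
    (calc (16 * N * 3 ^ d * g ^ 64) ^ scale d 0 ≤ (g ^ 32) ^ scale d 0 := by gcongr
      _ = decay d g 0 ^ 2 := by rw [decay, decayExp]; ring) hx'
  exact ⟨w, mem_ball.2 ⟨hw, hxw.le⟩, hv⟩

lemma abs_potential_sub_potential_lt (h : Params d N q g) (hw : |v w - E| < 1 / (8 * N))
    (hw' : |v w' - E| < 1 / (8 * N)) : |v w - v w'| < 1 / N := by
  have hN := h.two_le_cast
  have htri := abs_sub_le (v w) E (v w')
  rw [abs_sub_comm E] at htri
  have h8 : (1 : ℝ) / N = 8 * (1 / (8 * N)) := by field_simp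
  have hpos : (0 : ℝ) < 1 / (8 * N) := by positivity
  linarith

lemma volume_scale_zero_mul_le (h : Params d N q g) {j p : ℕ} (hj : j ≤ 2 * d)
    (hp : p ≤ siteExp d q) :
    (2 * (scale d 0 : ℝ) + 1) ^ j * (1 / N) ≤ 1 / (scale d 0 : ℝ) ^ p := by
  have hN := h.two_le_cast
  have hs : (1 : ℝ) ≤ scale d 0 := mod_cast (by norm_num : 1 ≤ 4096).trans (h.le_scale 0)
  rw [mul_one_div, div_le_div_iff₀ (by positivity) (by positivity), one_mul]
  calc (2 * (scale d 0 : ℝ) + 1) ^ j * (scale d 0 : ℝ) ^ p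
      ≤ (2 * (scale d 0 : ℝ) + 1) ^ (2 * d) * (scale d 0 : ℝ) ^ siteExp d q := by
        gcongr
        linarith
    _ ≤ N := mod_cast h.scale_zero_le

lemma prob_isSingularNear_scale_zero_le (h : Params d N q g) (hx : x ∈ Λ) (E₀ : ℝ) :
    prob (IsSingularNear (N := N) Λ (g ^ 64) E₀ (energyWindow d N g 0) (scale d 0) (decay d g 0) x)
      ≤ 1 / (scale d 0 : ℝ) ^ siteExp d q := by
  have := h.neZero
  have hN := h.two_le_cast
  have hcover (ω : Λ → Fin N) (hω : IsSingularNear Λ (g ^ 64) E₀ (energyWindow d N g 0) (scale d 0)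
      (decay d g 0) x ω) :
      ∃ w ∈ ball Λ x (scale d 0), |potential N Λ ω w - E₀| < 1 / (8 * N) + 1 / (8 * N) := by
    obtain ⟨E, hE, hsing⟩ := hω
    obtain ⟨w, hw, hv⟩ := h.exists_resonant_of_isSingular hx hsing
    exact ⟨w, hw, (abs_sub_le _ E _).trans_lt (add_lt_add_of_lt_of_le hv hE)⟩
  have hwidth : 2 * (1 / (8 * N) + 1 / (8 * N)) ≤ (1 : ℝ) / N := by
    have h8 : (1 : ℝ) / N = 8 * (1 / (8 * N)) := by field_simp
    have hpos : (0 : ℝ) < 1 / (8 * N) := by positivity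
    linarith
  exact (prob_mono hcover).trans <| (prob_exists_le_mul _ _ (by positivity)
    (card_ball_le_of_le Λ x le_rfl) fun w hw =>
      prob_abs_potential_sub_lt_le (ball_subset _ _ _ hw) E₀ hwidth).trans
    (h.volume_scale_zero_mul_le (by omega) le_rfl)

lemma prob_areJointlySingular_scale_zero_le (h : Params d N q g) (hx : x ∈ Λ) (hy : y ∈ Λ)
    (hxy : 2 * scale d 0 < supDist x y) :
    prob (AreJointlySingular (N := N) Λ (g ^ 64) (scale d 0) (decay d g 0) x y)
      ≤ 1 / (scale d 0 : ℝ) ^ q := by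
  have := h.neZero
  have hN := h.two_le_cast
  have hcover (ω : Λ → Fin N)
      (hω : AreJointlySingular Λ (g ^ 64) (scale d 0) (decay d g 0) x y ω) :
      ∃ w ∈ ball Λ x (scale d 0) ×ˢ ball Λ y (scale d 0),
        |potential N Λ ω w.1 - potential N Λ ω w.2| < 1 / N := by
    obtain ⟨E, hsx, hsy⟩ := hω
    obtain ⟨w, hw, hv⟩ := h.exists_resonant_of_isSingular hx hsx
    obtain ⟨w', hw', hv'⟩ := h.exists_resonant_of_isSingular hy hsy
    exact ⟨(w, w'), Finset.mem_product.2 ⟨hw, hw'⟩, h.abs_potential_sub_potential_lt hv hv'⟩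
  have hcard : ((ball Λ x (scale d 0) ×ˢ ball Λ y (scale d 0)).card : ℝ)
      ≤ (2 * (scale d 0 : ℝ) + 1) ^ (2 * d) := by
    rw [Finset.card_product, Nat.cast_mul, two_mul d, pow_add]
    gcongr <;> exact card_ball_le_of_le _ _ le_rfl
  refine (prob_mono hcover).trans <| (prob_exists_le_mul _ _ (c := 1 / N) (by positivity) hcard
    fun p hp => ?_).trans (h.volume_scale_zero_mul_le le_rfl (by unfold siteExp; omega))
  obtain ⟨hw, hw'⟩ := Finset.mem_product.1 hp
  refine prob_abs_potential_sub_potential_lt_le (ball_subset _ _ _ hw) (ball_subset _ _ _ hw') ?_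
  intro heq
  have htri := supDist_triangle x p.1 y
  have hxw := (mem_ball.1 hw).2
  have hyw := (mem_ball.1 hw').2
  rw [← heq, supDist_comm] at hyw
  omega

end Params

/-! ### The induction over scales -/

lemma volume_scale_succ_mul_sq_le (hd : 1 ≤ d) (k : ℕ) {j p : ℕ} (hp : 6 * j + 1 ≤ p) :
    (2 * (scale d (k + 1) : ℝ) + 1) ^ j * (1 / (scale d k : ℝ) ^ p) ^ 2 ≤
      1 / 2 * (1 / (scale d (k + 1) : ℝ) ^ p) := by
  have hcube : (scale d (k + 1) : ℝ) ^ 2 ≤ (scale d k : ℝ) ^ 3 := mod_cast scale_succ_sq_le hd k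
  have hsq : (scale d (k + 1) : ℝ) ≤ (scale d k : ℝ) ^ 2 := mod_cast scale_succ_le_sq hd k
  have hs : (4 : ℝ) ≤ scale d k := mod_cast (by have := mul_le_scale d k; omega : 4 ≤ scale d k)
  have hS : (4 : ℝ) ≤ scale d (k + 1) :=
    mod_cast (by have := mul_le_scale d (k + 1); omega : 4 ≤ scale d (k + 1))
  generalize (scale d k : ℝ) = s at *
  generalize (scale d (k + 1) : ℝ) = S at *
  have hvol : 2 * S + 1 ≤ s ^ 3 := by
    calc 2 * S + 1 ≤ 4 * S := by linarith
      _ ≤ s * s ^ 2 := by gcongr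
      _ = s ^ 3 := by ring
  have hkey : ((2 * S + 1) ^ j * (2 * S ^ p)) ^ 2 ≤ (s ^ (2 * p)) ^ 2 := by
    calc ((2 * S + 1) ^ j * (2 * S ^ p)) ^ 2 = ((2 * S + 1) ^ j) ^ 2 * 4 * (S ^ 2) ^ p := by ring
      _ ≤ ((s ^ 3) ^ j) ^ 2 * s * (s ^ 3) ^ p := by gcongr
      _ = s ^ (6 * j + 1 + 3 * p) := by ring
      _ ≤ s ^ (4 * p) := pow_le_pow_right₀ (by linarith) (by omega)
      _ = (s ^ (2 * p)) ^ 2 := by ring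
  rw [one_div_mul_one_div, one_div_pow, mul_one_div, ← pow_mul, mul_comm p,
    div_le_div_iff₀ (by positivity) (by positivity), one_mul]
  exact le_of_sq_le_sq hkey (by positivity)

lemma wegner_factors_le (hd : 1 ≤ d) (k P : ℕ) :
    (2 * (scale d (k + 1) : ℝ) + 1) ^ d *
        ((4 * scale d k + 1) ^ d * (2 * 3 ^ d) ^ (5 * scale d k)) * (2 * scale d (k + 1) ^ P)
      ≤ wegnerConst d P ^ scale d k := by
  have hsq : (scale d (k + 1) : ℝ) ≤ (scale d k : ℝ) ^ 2 := mod_cast scale_succ_le_sq hd k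
  have hS0 : (0 : ℝ) ≤ scale d (k + 1) := Nat.cast_nonneg _
  have hs := mul_le_scale d k
  have hpow : (scale d k : ℝ) ≤ 2 ^ scale d k := mod_cast Nat.lt_two_pow_self.le
  generalize (scale d (k + 1) : ℝ) = S at *
  generalize scale d k = s at *
  have hone : (1 : ℝ) ≤ 2 ^ s := one_le_pow₀ (by norm_num)
  have hS : S ≤ (2 ^ s) ^ 2 := hsq.trans (by gcongr)
  calc (2 * S + 1) ^ d * ((4 * s + 1) ^ d * (2 * 3 ^ d) ^ (5 * s)) * (2 * S ^ P)
      ≤ (3 * (2 ^ s) ^ 2) ^ d * ((5 * 2 ^ s) ^ d * (2 * 3 ^ d) ^ (5 * s)) *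
          (2 * ((2 ^ s) ^ 2) ^ P) := by
        have hS1 : 2 * S + 1 ≤ 3 * (2 ^ s) ^ 2 := by nlinarith
        gcongr
        linarith
    _ = 2 * (3 ^ d * 5 ^ d) * (2 ^ (3 * d + 2 * P)) ^ s * (2 * 3 ^ d) ^ (5 * s) := by ring
    _ = 2 * 15 ^ d * (2 ^ (3 * d + 2 * P)) ^ s * ((2 * 3 ^ d) ^ 5) ^ s := by
        rw [← mul_pow, pow_mul _ 5]
        norm_num
    _ ≤ (2 * 15 ^ d) ^ s * (2 ^ (3 * d + 2 * P)) ^ s * ((2 * 3 ^ d) ^ 5) ^ s := by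
        gcongr
        exact le_self_pow₀ (one_le_mul_of_one_le_of_one_le one_le_two
          (one_le_pow₀ (by norm_num))) (by omega)
    _ = wegnerConst d P ^ s := by
        unfold wegnerConst
        push_cast
        rw [← mul_pow, ← mul_pow]

lemma exists_side {a c x y : Fin d → ℤ} {r : ℕ} (hx : x ∈ Finset.Icc a c)
    (hy : y ∈ Finset.Icc a c) (h : r < supDist x y) : ∃ i, a i + r ≤ c i := by
  by_contra! hside
  refine h.not_ge (supDist_le_iff.2 fun i => ?_)
  have hi := hside i
  rw [Finset.mem_Icc] at hx hy
  have hxi : a i ≤ x i ∧ x i ≤ c i := ⟨hx.1 i, hx.2 i⟩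
  have hyi : a i ≤ y i ∧ y i ≤ c i := ⟨hy.1 i, hy.2 i⟩
  omega

namespace Params

variable {N q : ℕ} {g : ℝ} {a c x y : Fin d → ℤ} {i₀ : Fin d}

lemma volume_mul_prob_le (h : Params d N q g) (k : ℕ) :
    (2 * (scale d (k + 1) : ℝ) + 1) ^ d * ((4 * scale d k + 1) ^ d * (2 * 3 ^ d) ^ (5 * scale d k) *
        (1 / (N : ℝ) ^ (scale d k / 128)))
      ≤ 1 / 2 * (1 / (scale d (k + 1) : ℝ) ^ siteExp d q) := by
  have hN := h.two_le_cast
  have hS : (0 : ℝ) < scale d (k + 1) :=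
    mod_cast (by have := h.le_scale (k + 1); omega : 0 < scale d (k + 1))
  rw [one_div_mul_one_div, ← mul_assoc, mul_one_div,
    div_le_div_iff₀ (by positivity) (by positivity), one_mul]
  refine (wegner_factors_le h.one_le_dim k _).trans ?_
  calc (wegnerConst d (siteExp d q) : ℝ) ^ scale d k
      = ((wegnerConst d (siteExp d q) : ℝ) ^ 128) ^ (scale d k / 128) := by
        rw [← pow_mul, Nat.mul_div_cancel' (dvd_scale d k)]
    _ ≤ (N : ℝ) ^ (scale d k / 128) := by
        gcongr
        exact_mod_cast h.wegnerConst_le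

lemma prob_isSingularNear_le (h : Params d N q g) (k : ℕ) (hside : a i₀ + scale d k ≤ c i₀)
    (hx : x ∈ Finset.Icc a c) (E₀ : ℝ) :
    prob (IsSingularNear (N := N) (Finset.Icc a c) (g ^ 64) E₀ (energyWindow d N g k) (scale d k)
      (decay d g k) x) ≤ 1 / (scale d k : ℝ) ^ siteExp d q := by
  induction k generalizing x with
  | zero => exact h.prob_isSingularNear_scale_zero_le hx E₀
  | succ k ih =>
    have := h.neZero
    have hscale := h.le_scale k
    have hnext := mul_scale_le_scale_succ d k
    rw [decay_succ]
    refine (Anderson.prob_isSingularNear_le hx (by omega) (h.decay_pos k) (h.decay_lt_one k)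
      (scaleSteps_mul_add_le d k) (h.energyWindow_succ_le k) (by positivity)
      (fun w hw => ih (by omega) hw) fun b => h.prob_hasQuasimode_le k hside E₀ b).trans ?_
    have hpair := volume_scale_succ_mul_sq_le h.one_le_dim k (j := 2 * d) (p := siteExp d q)
      (by have := h.le_exp; unfold siteExp; omega)
    linarith [h.volume_mul_prob_le k]

lemma volume_mul_volume_mul_le (h : Params d N q g) (k : ℕ) :
    2 * ((2 * (scale d (k + 1) : ℝ) + 1) ^ d * ((6 * scale d k + 1) ^ d *
        (1 / (scale d (k + 1) : ℝ) ^ siteExp d q)))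
      ≤ 1 / 2 * (1 / (scale d (k + 1) : ℝ) ^ q) := by
  have hsS : 64 * (scale d k : ℝ) ≤ scale d (k + 1) := mod_cast mul_scale_le_scale_succ d k
  have hs : (4096 : ℝ) ≤ scale d k := mod_cast h.le_scale k
  generalize (scale d k : ℝ) = s at *
  generalize (scale d (k + 1) : ℝ) = S at *
  have hS : 4 ≤ S := by linarith
  rw [one_div_mul_one_div, mul_one_div, mul_div_assoc', mul_div_assoc',
    div_le_div_iff₀ (by positivity) (by positivity), one_mul]
  calc 2 * ((2 * S + 1) ^ d * (6 * s + 1) ^ d) * (2 * S ^ q)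
      ≤ 2 * ((S ^ 2) ^ d * S ^ d) * (2 * S ^ q) := by
        gcongr
        · nlinarith
        · linarith
    _ = 4 * S ^ (q + 3 * d) := by ring
    _ ≤ S * S ^ (q + 3 * d) := by gcongr
    _ = S ^ siteExp d q := by rw [siteExp]; ring

lemma prob_areJointlySingular_le (h : Params d N q g) (k : ℕ) (hx : x ∈ Finset.Icc a c)
    (hy : y ∈ Finset.Icc a c) (hxy : 2 * scale d k < supDist x y) :
    prob (AreJointlySingular (N := N) (Finset.Icc a c) (g ^ 64) (scale d k) (decay d g k) x y)
      ≤ 1 / (scale d k : ℝ) ^ q := by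
  induction k generalizing x y with
  | zero => exact h.prob_areJointlySingular_scale_zero_le hx hy hxy
  | succ k ih =>
    have := h.neZero
    have hg := h.pos
    have hscale := h.le_scale k
    obtain ⟨i₀, hi₀⟩ := exists_side hx hy (r := scale d (k + 1)) (by omega)
    have hsite (E₀ : ℝ) (w : Fin d → ℤ) (hw : w ∈ Finset.Icc a c) :=
      h.prob_isSingularNear_le (k + 1) hi₀ hw E₀
    rw [decay_succ] at hsite ⊢
    refine (Anderson.prob_areJointlySingular_le (by positivity) (by omega) (h.decay_pos k)
      (h.decay_lt_one k) (scaleSteps_mul_add_le d k) (h.decay_mul_volume_le_energyWindow k)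
      (by positivity) hsite (fun w hw z hz hwz => ih hw hz hwz) hx hy hxy).trans ?_
    have hpair := volume_scale_succ_mul_sq_le h.one_le_dim k (j := 4 * d) (p := q)
      (by have := h.le_exp; omega)
    linarith [h.volume_mul_volume_mul_le k]

end Params

/-! ### From regularity to the eigenfunction correlator -/

lemma expect_le_prob_add {Ω : Type*} [Fintype Ω] {f : Ω → ℝ} {A : Ω → Prop} {c : ℝ} (hc : 0 ≤ c)
    (hf : ∀ ω, f ω ≤ 1) (hA : ∀ ω, ¬ A ω → f ω ≤ c) : expect f ≤ prob A + c := by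
  classical
  rcases isEmpty_or_nonempty Ω with hΩ | hΩ
  · simpa [expect, prob] using hc
  have hsum : ∑ ω, f ω ≤ ∑ ω, ((if A ω then 1 else 0) + c) := by
    refine Finset.sum_le_sum fun ω _ => ?_
    split_ifs with hω
    · linarith [hf ω]
    · linarith [hA ω hω]
  have hcard : (0 : ℝ) < Fintype.card Ω := mod_cast Fintype.card_pos
  rw [expect, prob_eq_expect, expect, div_add' _ _ _ hcard.ne',
    div_le_div_iff_of_pos_right hcard]
  rw [Finset.sum_add_distrib, Finset.sum_const, Finset.card_univ, nsmul_eq_mul] at hsum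
  rwa [mul_comm c]

section Correlator

variable {n : Type*} [Fintype n]

/-- The eigenfunction correlator `∑_β |f_β(x) f_β(y)|` of the basis formed by the rows of `f`. -/
def correlator (f : Matrix n n ℝ) (x y : n) : ℝ := ∑ β, |f β x * f β y|

variable [DecidableEq n]

/-- The rows of `f` form an orthonormal basis consisting of eigenvectors of `M`. -/
structure IsEigenbasis (M f : Matrix n n ℝ) : Prop where
  mul_transpose : f * f.transpose = 1
  exists_mulVec_eq_smul : ∀ β, ∃ μ : ℝ, M.mulVec (f β) = μ • f β

lemma sum_sq_eq_one {f : Matrix n n ℝ} (hf : f * f.transpose = 1) (x : n) :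
    ∑ β, f β x ^ 2 = 1 := by
  have hdiag := congrArg (fun M : Matrix n n ℝ => M x x) (mul_eq_one_comm.1 hf)
  simpa only [Matrix.mul_apply, Matrix.transpose_apply, Matrix.one_apply_eq, ← sq] using hdiag

lemma correlator_le_one {f : Matrix n n ℝ} (hf : f * f.transpose = 1) (x y : n) :
    correlator f x y ≤ 1 := by
  calc correlator f x y ≤ ∑ β, (f β x ^ 2 + f β y ^ 2) / 2 := by
        refine Finset.sum_le_sum fun β _ => ?_
        rw [abs_mul, ← sq_abs (f β x), ← sq_abs (f β y)]
        linarith [two_mul_le_add_sq |f β x| |f β y|]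
    _ = 1 := by
        rw [← Finset.sum_div, Finset.sum_add_distrib, sum_sq_eq_one hf, sum_sq_eq_one hf]
        norm_num

end Correlator

section Regular

variable {N s : ℕ} {Λ : Finset (Fin d → ℤ)} {γ δ μ : ℝ} {v : (Fin d → ℤ) → ℝ} {x : Λ}

lemma IsRegular.abs_apply_le_sum (h : IsRegular Λ γ v μ s δ x) (hδ : 0 ≤ δ) {f : Λ → ℝ}
    (hf : (hamOn d γ v Λ).mulVec f = μ • f) :
    |f x| ≤ δ * ∑ w : Λ with ↑w ∈ ball Λ x s, |f w| := by
  set u : (Fin d → ℤ) → ℝ := fun z => if h : z ∈ Λ then f ⟨z, h⟩ else 0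
  have hu (w : Λ) : u w = f w := by simp [u]
  have hux := h u fun w hw _ => by
    rw [solvesAt_iff_hamOn_mulVec (w := (⟨w, hw⟩ : Λ)), funext hu, hf, Pi.smul_apply,
      smul_eq_mul, hu]
  rw [hu] at hux
  refine hux.trans (mul_le_mul_of_nonneg_left (localMax_le (by positivity) fun w hw => ?_) hδ)
  have hwΛ := ball_subset Λ x s hw
  rw [hu ⟨w, hwΛ⟩]
  exact Finset.single_le_sum (f := fun w => |f w|) (fun _ _ => abs_nonneg _)
    (Finset.mem_filter.2 ⟨Finset.mem_univ (⟨w, hwΛ⟩ : Λ), hw⟩)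

lemma sum_mul_sum_ball_mul_le {f : Matrix Λ Λ ℝ} (hf : f * f.transpose = 1) (x y : Λ) (s : ℕ)
    (hδ : 0 ≤ δ) :
    ∑ β, (δ * ∑ w : Λ with ↑w ∈ ball Λ x s, |f β w|) * |f β y| ≤ δ * (2 * s + 1) ^ d := by
  have hcard : (Finset.univ.filter fun w : Λ => ↑w ∈ ball Λ x s).card ≤ (2 * s + 1) ^ d :=
    (Finset.card_le_card_of_injOn Subtype.val (by simp [Set.MapsTo])
      Subtype.val_injective.injOn).trans (card_ball_le Λ x s)
  calc ∑ β, (δ * ∑ w : Λ with ↑w ∈ ball Λ x s, |f β w|) * |f β y|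
      = δ * ∑ w : Λ with ↑w ∈ ball Λ x s, correlator f w y := by
        simp only [correlator, abs_mul, mul_assoc, Finset.sum_mul, ← Finset.mul_sum]
        rw [Finset.sum_comm]
    _ ≤ δ * ∑ w : Λ with ↑w ∈ ball Λ x s, 1 := by
        gcongr
        exact correlator_le_one hf _ y
    _ ≤ δ * (2 * s + 1) ^ d := by
        rw [Finset.sum_const, nsmul_one]
        gcongr
        exact_mod_cast hcard

lemma IsEigenbasis.correlator_le_of_isRegular {f : Matrix Λ Λ ℝ}
    (hf : IsEigenbasis (hamOn d γ v Λ) f) (hδ : 0 ≤ δ) {x y : Λ}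
    (hreg : ∀ E, IsRegular Λ γ v E s δ x ∨ IsRegular Λ γ v E s δ y) :
    correlator f x y ≤ 2 * (δ * (2 * s + 1) ^ d) := by
  set B : Λ → Λ → ℝ := fun x β => δ * ∑ w : Λ with ↑w ∈ ball Λ x s, |f β w|
  have hB (x β : Λ) : 0 ≤ B x β := mul_nonneg hδ (Finset.sum_nonneg fun _ _ => abs_nonneg _)
  calc correlator f x y ≤ ∑ β, (B x β * |f β y| + B y β * |f β x|) := by
        refine Finset.sum_le_sum fun β _ => ?_
        obtain ⟨μ, hμ⟩ := hf.exists_mulVec_eq_smul β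
        have hx := mul_nonneg (hB x β) (abs_nonneg (f β y))
        have hy := mul_nonneg (hB y β) (abs_nonneg (f β x))
        rw [abs_mul]
        rcases hreg μ with h | h
        · have := mul_le_mul_of_nonneg_right (h.abs_apply_le_sum hδ hμ) (abs_nonneg (f β y))
          linarith
        · have := mul_le_mul_of_nonneg_left (h.abs_apply_le_sum hδ hμ) (abs_nonneg (f β x))
          linarith
    _ ≤ 2 * (δ * (2 * s + 1) ^ d) := by
        rw [Finset.sum_add_distrib, two_mul]
        exact add_le_add (sum_mul_sum_ball_mul_le hf.mul_transpose x y s hδ)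
          (sum_mul_sum_ball_mul_le hf.mul_transpose y x s hδ)

lemma expect_correlator_le {φ : (Λ → Fin N) → Matrix Λ Λ ℝ}
    (hφ : ∀ ω, IsEigenbasis (hamOn d γ (potential N Λ ω) Λ) (φ ω)) (hδ : 0 ≤ δ) (s : ℕ) (x y : Λ) :
    expect (fun ω => correlator (φ ω) x y)
      ≤ prob (fun ω => ∃ E, ¬ IsRegular Λ γ (potential N Λ ω) E s δ x ∧
          ¬ IsRegular Λ γ (potential N Λ ω) E s δ y) + 2 * (δ * (2 * s + 1) ^ d) :=
  expect_le_prob_add (by positivity) (fun ω => correlator_le_one (hφ ω).mul_transpose x y)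
    fun ω hω => (hφ ω).correlator_le_of_isRegular hδ fun E => by
      by_contra! h
      exact hω ⟨E, h⟩

end Regular

lemma exists_scale_lt_le (hd : 1 ≤ d) {m : ℕ} (hm : 2 * scale d 0 < m) :
    ∃ k, 2 * scale d k < m ∧ m ≤ 2 * scale d (k + 1) := by
  by_contra! hcon
  have hlt (k : ℕ) : 2 * scale d k < m := by
    induction k with
    | zero => exact hm
    | succ k ih => exact hcon k ih
  have hmono : StrictMono (scale d) := strictMono_nat_of_lt_succ fun k => by
    have := mul_le_scale d k
    have := mul_scale_le_scale_succ d k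
    omega
  have := hlt m
  have := hmono.le_apply (x := m)
  omega

namespace Params

variable {N q T : ℕ} {g : ℝ} {Λ : Finset (Fin d → ℤ)}

lemma two_mul_scale_zero_pow_le (h : Params d N q g) {j : ℕ} (hj : j ≤ siteExp d q) :
    2 * (scale d 0 : ℝ) ^ j ≤ N := by
  have hs := h.le_scale 0
  have hd := h.one_le_dim
  refine le_trans ?_ (Nat.cast_le.2 h.scale_zero_le)
  push_cast
  have hs1 : (1 : ℝ) ≤ scale d 0 := mod_cast (by omega : 1 ≤ scale d 0)
  have hvol : (2 : ℝ) ≤ (2 * scale d 0 + 1) ^ (2 * d) :=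
    (by linarith : (2 : ℝ) ≤ 2 * scale d 0 + 1).trans (le_self_pow₀ (by linarith) (by omega))
  gcongr

lemma decay_sq_mul_le (h : Params d N q g) (hT : T ≤ siteExp d q) (k : ℕ) :
    2 * (decay d g k ^ 2 * (2 * scale d k + 1) ^ d) * (2 * (scale d k : ℝ) ^ (3 * T)) ≤ 1 := by
  have hg := h.pos
  have hs := h.le_scale k
  have hdecay : decay d g k ^ 2 ≤ g ^ scale d k := by
    rw [decay, ← pow_mul]
    exact h.pow_le_pow (by have := mul_scale_le_decayExp d k; omega)
  have hvol : 2 * (scale d k : ℝ) + 1 ≤ 3 ^ scale d k := by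
    have := one_add_mul_le_pow (a := (2 : ℝ)) (by norm_num) (scale d k)
    norm_num at this
    linarith
  have hscale : (scale d k : ℝ) ^ 3 ≤ 8 ^ scale d k := by
    calc (scale d k : ℝ) ^ 3 ≤ (2 ^ scale d k) ^ 3 := by
          gcongr
          exact_mod_cast Nat.lt_two_pow_self.le
      _ = 8 ^ scale d k := by rw [pow_right_comm]; norm_num
  have hcard : (8 : ℝ) ^ T ≤ N := by
    have hs0 : (8 : ℝ) ≤ scale d 0 := mod_cast (by have := h.le_scale 0; omega : 8 ≤ scale d 0)
    calc (8 : ℝ) ^ T ≤ (scale d 0 : ℝ) ^ T := by gcongr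
      _ ≤ 2 * (scale d 0 : ℝ) ^ T := le_mul_of_one_le_left (by positivity) one_le_two
      _ ≤ N := h.two_mul_scale_zero_pow_le hT
  generalize scale d k = s at *
  calc 2 * (decay d g k ^ 2 * (2 * s + 1) ^ d) * (2 * (s : ℝ) ^ (3 * T))
      ≤ 2 * (g ^ s * (3 ^ s) ^ d) * (2 * (8 ^ s) ^ T) := by
        rw [pow_mul _ 3]
        gcongr
    _ = 4 * (g * (3 ^ d * 8 ^ T)) ^ s := by ring
    _ ≤ 4 ^ s * (g * (3 ^ d * 8 ^ T)) ^ s := by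
        gcongr
        exact le_self_pow₀ (by norm_num) (by omega)
    _ = (g * (4 * 8 ^ T * 3 ^ d)) ^ s := by
        rw [← mul_pow]
        ring
    _ ≤ (g * (64 * N * 3 ^ d)) ^ s := by gcongr; norm_num
    _ ≤ 1 := pow_le_one₀ (by positivity) h.mul_card_mul_pow_le_one

lemma one_div_scale_pow_add_le (h : Params d N q g) (hT : 3 * T + 1 ≤ q) (k : ℕ) :
    1 / (scale d k : ℝ) ^ q + 2 * (decay d g k ^ 2 * (2 * scale d k + 1) ^ d)
      ≤ 1 / (scale d k : ℝ) ^ (3 * T) := by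
  have hs : (2 : ℝ) ≤ scale d k := mod_cast (by have := h.le_scale k; omega : 2 ≤ scale d k)
  have hprob : 1 / (scale d k : ℝ) ^ q ≤ 1 / (2 * (scale d k : ℝ) ^ (3 * T)) := by
    refine one_div_le_one_div_of_le (by positivity) ?_
    calc 2 * (scale d k : ℝ) ^ (3 * T) ≤ scale d k * (scale d k : ℝ) ^ (3 * T) := by gcongr
      _ = (scale d k : ℝ) ^ (3 * T + 1) := by ring
      _ ≤ (scale d k : ℝ) ^ q := pow_le_pow_right₀ (by linarith) hT
  have hdecay : 2 * (decay d g k ^ 2 * (2 * scale d k + 1) ^ d) ≤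
      1 / (2 * (scale d k : ℝ) ^ (3 * T)) := by
    rw [le_div_iff₀ (by positivity)]
    exact h.decay_sq_mul_le (by unfold siteExp; omega) k
  calc _ ≤ 1 / (2 * (scale d k : ℝ) ^ (3 * T)) + 1 / (2 * (scale d k : ℝ) ^ (3 * T)) :=
        add_le_add hprob hdecay
    _ = 1 / (scale d k : ℝ) ^ (3 * T) := by field_simp; norm_num

section Basis

variable {φ : (Λ → Fin N) → Matrix Λ Λ ℝ} {x y : Λ}

lemma prob_not_isRegular_one_le (h : Params d N q g) (hxy : x ≠ y) :
    prob (fun ω : Λ → Fin N =>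
        ∃ E, ¬ IsRegular Λ (g ^ 64) (potential N Λ ω) E 1 (16 * N * 3 ^ d * g ^ 64) x ∧
          ¬ IsRegular Λ (g ^ 64) (potential N Λ ω) E 1 (16 * N * 3 ^ d * g ^ 64) y) ≤ 1 / N := by
  have := h.neZero
  refine (prob_mono fun ω ⟨E, hx, hy⟩ => ?_).trans
    (prob_abs_potential_sub_potential_lt_le x.2 y.2 (Subtype.coe_ne_coe.2 hxy))
  have hres {z : Λ}
      (hz : ¬ IsRegular Λ (g ^ 64) (potential N Λ ω) E 1 (16 * N * 3 ^ d * g ^ 64) z) :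
      |potential N Λ ω z - E| < 1 / (8 * N) := by
    obtain ⟨w, -, hzw, hw⟩ := h.exists_resonant_of_not_isRegular z.2 (pow_one _).le hz
    rwa [supDist_eq_zero.1 (Nat.lt_one_iff.1 hzw)]
  exact h.abs_potential_sub_potential_lt (hres hx) (hres hy)

lemma expect_correlator_le_of_ne (h : Params d N q g) (hT : 2 * T ≤ siteExp d q)
    (hφ : ∀ ω, IsEigenbasis (hamOn d (g ^ 64) (potential N Λ ω) Λ) (φ ω)) (hxy : x ≠ y) :
    expect (fun ω => correlator (φ ω) x y) ≤ 1 / (scale d 0 : ℝ) ^ (2 * T) := by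
  have hg := h.pos
  have hN := h.two_le_cast
  have hs : (0 : ℝ) < scale d 0 := mod_cast (by have := h.le_scale 0; omega : 0 < scale d 0)
  have hreg : 2 * (16 * N * 3 ^ d * g ^ 64 * (2 * (1 : ℕ) + 1) ^ d) ≤ (1 : ℝ) / N := by
    rw [le_div_iff₀ (by positivity)]
    calc 2 * (16 * N * 3 ^ d * g ^ 64 * (2 * (1 : ℕ) + 1) ^ d) * N
        = g ^ 62 * (g * (64 * N * 3 ^ d)) ^ 2 / 128 := by norm_num; ring
      _ ≤ 1 * 1 ^ 2 / 128 := by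
        gcongr
        · exact pow_le_one₀ hg.le h.lt_one.le
        · exact h.mul_card_mul_pow_le_one
      _ ≤ 1 := by norm_num
  calc expect (fun ω => correlator (φ ω) x y) ≤ 1 / N + 1 / N :=
        (expect_correlator_le hφ (by positivity) 1 x y).trans
          (add_le_add (h.prob_not_isRegular_one_le hxy) hreg)
    _ = 2 / N := by ring
    _ ≤ 1 / (scale d 0 : ℝ) ^ (2 * T) := by
        rw [div_le_div_iff₀ (by positivity) (by positivity), one_mul]
        exact h.two_mul_scale_zero_pow_le hT

lemma expect_correlator_le_scale (h : Params d N q g) (hΛ : IsRect Λ) (hT : 3 * T + 1 ≤ q)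
    (hφ : ∀ ω, IsEigenbasis (hamOn d (g ^ 64) (potential N Λ ω) Λ) (φ ω)) {k : ℕ}
    (hxy : 2 * scale d k < supDist (x : Fin d → ℤ) y) :
    expect (fun ω => correlator (φ ω) x y) ≤ 1 / (scale d k : ℝ) ^ (3 * T) := by
  obtain ⟨a, c, rfl⟩ := hΛ
  exact (expect_correlator_le hφ (sq_nonneg (decay d g k)) (scale d k) x y).trans <|
    (add_le_add_left (h.prob_areJointlySingular_le k x.2 y.2 hxy) _).trans
      (h.one_div_scale_pow_add_le hT k)

lemma expect_correlator_le (h : Params d N q g) (hΛ : IsRect Λ) (hT : 3 * T + 1 ≤ q)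
    (hφ : ∀ ω, IsEigenbasis (hamOn d (g ^ 64) (potential N Λ ω) Λ) (φ ω)) (x y : Λ) :
    expect (fun ω => correlator (φ ω) x y)
      ≤ 1 / ((max (dist1 (x : Fin d → ℤ) y) 1 : ℕ) : ℝ) ^ T := by
  have hdist := dist1_le_mul_supDist (x : Fin d → ℤ) y
  have hd := h.one_le_dim
  suffices hbound : ∃ M : ℕ, max (dist1 (x : Fin d → ℤ) y) 1 ≤ M ∧
      expect (fun ω => correlator (φ ω) x y) ≤ 1 / (M : ℝ) ^ T by
    obtain ⟨M, hM, hle⟩ := hbound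
    exact hle.trans (by gcongr)
  rcases eq_or_ne x y with rfl | hne
  · refine ⟨1, by simp [dist1], ?_⟩
    have hone := expect_le_prob_add (A := fun _ : Λ → Fin N => False) zero_le_one
      (fun ω => correlator_le_one (hφ ω).mul_transpose x x)
      fun ω _ => correlator_le_one (hφ ω).mul_transpose x x
    simpa [prob] using hone
  rcases le_or_gt (supDist (x : Fin d → ℤ) y) (2 * scale d 0) with hnear | hfar
  · refine ⟨scale d 0 ^ 2, ?_, ?_⟩
    · have := mul_le_scale d 0
      refine max_le (hdist.trans ?_) (Nat.one_le_pow _ _ (by omega))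
      nlinarith
    · simpa only [Nat.cast_pow, ← pow_mul] using
        h.expect_correlator_le_of_ne (by unfold siteExp; omega) hφ hne
  · obtain ⟨k, hk, hk'⟩ := exists_scale_lt_le hd hfar
    refine ⟨scale d k ^ 3, ?_, ?_⟩
    · have := mul_le_scale d k
      have := scale_succ_le_sq hd k
      refine max_le (hdist.trans ?_) (Nat.one_le_pow _ _ (by omega))
      calc d * supDist (x : Fin d → ℤ) y ≤ d * (2 * scale d k ^ 2) := by gcongr; omega
        _ = 2 * d * scale d k ^ 2 := by ring
        _ ≤ scale d k * scale d k ^ 2 := Nat.mul_le_mul_right _ (by omega)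
        _ = scale d k ^ 3 := by ring
    · simpa only [Nat.cast_pow, ← pow_mul] using h.expect_correlator_le_scale hΛ hT hφ hk

end Basis

lemma exists_forall_le_exists (hd : 1 ≤ d) (hq : 24 * d + 1 ≤ q) :
    ∃ N₀ : ℕ, ∀ N, N₀ ≤ N → ∃ γ₀ : ℝ, 0 < γ₀ ∧ γ₀ < 1 ∧
      ∀ γ, 0 < γ → γ ≤ γ₀ → ∃ g, g ^ 64 = γ ∧ Params d N q g := by
  refine ⟨2 + (2 * scale d 0 + 1) ^ (2 * d) * scale d 0 ^ siteExp d q +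
    wegnerConst d (siteExp d q) ^ 128, fun N hN => ?_⟩
  have hB : (1 : ℝ) < 64 * N * d * 21 ^ d := by
    have : 0 < N * d * 21 ^ d := Nat.mul_pos (Nat.mul_pos (by omega) hd) (by positivity)
    exact_mod_cast (by nlinarith : 1 < 64 * N * d * 21 ^ d)
  set B : ℝ := 64 * N * d * 21 ^ d with hBdef
  have hB0 : 0 < B := by linarith
  refine ⟨B⁻¹ ^ 64, by positivity, pow_lt_one₀ (by positivity) (inv_lt_one_of_one_lt₀ hB)
    (by norm_num), fun γ hγ hle => ?_⟩
  have hpow : (γ ^ (64 : ℝ)⁻¹) ^ 64 = γ := Real.rpow_inv_natCast_pow hγ.le (by norm_num)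
  refine ⟨γ ^ (64 : ℝ)⁻¹, hpow, hd, by omega, by positivity, ?_, hq, by omega, by omega⟩
  rw [← hBdef, ← le_inv_mul_iff₀' hB0, mul_one]
  exact le_of_pow_le_pow_left₀ (by norm_num) (by positivity) (hpow.le.trans hle)

end Params

end Anderson

/-- **Theorem 1.2, part 1** (decay of the eigenfunction correlator in mean).
For any choice, for each potential configuration, of an orthonormal basis of `ℝ^Λ`
consisting of eigenvectors of the Anderson Hamiltonian `H`, and any `x, y ∈ Λ`,
`𝔼 ∑_β |φ_β(x) φ_β(y)| ≤ (max(|x-y|,1))^{-(p/2-d-1)}`. -/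
theorem eigenfunction_correlator_decay :
    ∀ d : ℕ, 1 ≤ d →
    ∃ p₀ : ℝ, ∀ p : ℝ, p₀ ≤ p →
    ∃ N₀ : ℕ, ∀ N : ℕ, N₀ ≤ N →
    ∃ γ₀ : ℝ, 0 < γ₀ ∧ γ₀ < 1 ∧
    ∀ γ : ℝ, 0 < γ → γ ≤ γ₀ →
    ∀ Λ : Finset (Fin d → ℤ), IsRect Λ →
    ∀ φ : (↥Λ → Fin N) → ↥Λ → ↥Λ → ℝ,
    (∀ ω β β', ∑ z, φ ω β z * φ ω β' z = if β = β' then 1 else 0) →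
    (∀ ω β, ∃ μ : ℝ, (hamOn d γ (potential N Λ ω) Λ).mulVec (φ ω β) = μ • φ ω β) →
    ∀ x y : ↥Λ,
    expect (fun ω => ∑ β, |φ ω β x * φ ω β y|)
      ≤ ((max (dist1 (x : Fin d → ℤ) (y : Fin d → ℤ)) 1 : ℕ) : ℝ) ^ (-(p/2 - d - 1)) := by
  intro d hd
  refine ⟨0, fun p _ => ?_⟩
  obtain ⟨T, hT⟩ := exists_nat_ge (p / 2 - d - 1)
  obtain ⟨N₀, hN₀⟩ :=
    Anderson.Params.exists_forall_le_exists (q := 3 * T + 24 * d + 1) hd (by omega)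
  refine ⟨N₀, fun N hN => ?_⟩
  obtain ⟨γ₀, hγ₀, hγ₀1, hparams⟩ := hN₀ N hN
  refine ⟨γ₀, hγ₀, hγ₀1, fun γ hγ hle Λ hΛ φ horth heig x y => ?_⟩
  obtain ⟨g, rfl, h⟩ := hparams γ hγ hle
  have hbasis (ω) : Anderson.IsEigenbasis (hamOn d (g ^ 64) (potential N Λ ω) Λ) (φ ω) :=
    ⟨Matrix.ext fun β β' => (Matrix.mul_apply ..).trans (horth ω β β'), heig ω⟩
  have hD : (1 : ℝ) ≤ (max (dist1 (x : Fin d → ℤ) y) 1 : ℕ) := mod_cast le_max_right _ _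
  refine (h.expect_correlator_le hΛ (T := T) (by omega) hbasis x y).trans ?_
  rw [one_div, ← Real.rpow_natCast, ← Real.rpow_neg (by positivity)]
  exact Real.rpow_le_rpow_of_exponent_le hD (neg_le_neg hT)
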